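/- arXiv:math/9411210 — 5 statements merged into one kernel-verified Lean document; each statement's English description precedes it below -/
import Mathlib

section
/- Let m ≥ 2 and let N be a symmetric lattice norm on ℝ^m (functions Fin m → ℝ) that is not proportional to the Euclidean norm, i.e. there is no constant c > 0 with N(x) = c·(∑ x_i²)^{1/2} for all x. Let H be a separable real Hilbert space with dim H ≥ 2, and equip X = (Fin m → H) with the norm ‖f‖ = N(fun i => ‖f i‖_H). Then for every surjective linear isometry T : X → X there exist a permutation σ of Fin m, a map a : Fin m → ℝ with |a i| = 1 for every i, and a family S : Fin m → (H → H) of surjective linear isometries of H, such that for every f ∈ X and every i, (T f) i = a i • S i (f (σ i)). -/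
open scoped RealInnerProductSpace

/-- `N` is a norm on `Fin m → ℝ`. -/
def IsNorm {m : ℕ} (N : (Fin m → ℝ) → ℝ) : Prop :=
  (∀ x, N x = 0 ↔ x = 0) ∧
  (∀ (c : ℝ) (x : Fin m → ℝ), N (c • x) = |c| * N x) ∧
  (∀ x y, N (x + y) ≤ N x + N y)

/-- `N` is a lattice norm: it depends only on coordinatewise absolute values, monotonically. -/
def IsLatticeNorm {m : ℕ} (N : (Fin m → ℝ) → ℝ) : Prop :=
  IsNorm N ∧ (∀ x, N x = N fun i => |x i|) ∧
  ∀ x y : Fin m → ℝ, (∀ i, |x i| ≤ |y i|) → N x ≤ N y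

/-- `N` is a symmetric lattice norm: a lattice norm invariant under permutations. -/
def IsSymmLatticeNorm {m : ℕ} (N : (Fin m → ℝ) → ℝ) : Prop :=
  IsLatticeNorm N ∧ ∀ (π : Equiv.Perm (Fin m)) (x : Fin m → ℝ), N (x ∘ π) = N x

/-- `y` is a supporting functional of `N` at `x`. -/
def Supp {m : ℕ} (N : (Fin m → ℝ) → ℝ) (x y : Fin m → ℝ) : Prop :=
  y ⬝ᵥ x = N x ∧ ∀ z, y ⬝ᵥ z ≤ N z

lemma IsNorm.nonneg {m : ℕ} {N : (Fin m → ℝ) → ℝ} (hN : IsNorm N) (x : Fin m → ℝ) : 0 ≤ N x := by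
  have h1 := hN.2.2 x ((-1 : ℝ) • x)
  rw [hN.2.1] at h1
  have h2 : x + (-1 : ℝ) • x = 0 := by simp
  rw [h2, (hN.1 0).2 rfl] at h1
  simp at h1
  linarith

lemma IsNorm.pos {m : ℕ} {N : (Fin m → ℝ) → ℝ} (hN : IsNorm N) {x : Fin m → ℝ} (hx : x ≠ 0) :
    0 < N x :=
  lt_of_le_of_ne (hN.nonneg x) (fun h => hx ((hN.1 x).1 h.symm))

lemma exists_supp {m : ℕ} {N : (Fin m → ℝ) → ℝ} (hN : IsNorm N) (x : Fin m → ℝ) (hx : x ≠ 0) :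
    ∃ y, Supp N x y := by
  obtain ⟨g, hg1, hg2⟩ := exists_extension_of_le_sublinear
    (LinearPMap.mkSpanSingleton (K := ℝ) x (N x) hx) N
    (fun c hc z => by rw [hN.2.1, abs_of_pos hc]) hN.2.2 (by
      rintro ⟨z, hz⟩
      obtain ⟨c, rfl⟩ := Submodule.mem_span_singleton.1 hz
      have h1 : (LinearPMap.mkSpanSingleton (K := ℝ) x (N x) hx) ⟨c • x, hz⟩ = c • N x :=
        LinearPMap.mkSpanSingleton'_apply x (N x) _ c hz
      rw [h1, hN.2.1, smul_eq_mul]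
      exact mul_le_mul_of_nonneg_right (le_abs_self c) (hN.nonneg x))
  have key : ∀ z, (fun i => g (Pi.single i 1)) ⬝ᵥ z = g z := by
    intro z
    rw [LinearMap.pi_apply_eq_sum_univ g z]
    simp only [dotProduct, smul_eq_mul]
    refine Finset.sum_congr rfl fun i _ => ?_
    rw [mul_comm]
    congr 2
    ext j
    simp [Pi.single_apply, eq_comm]
  refine ⟨fun i => g (Pi.single i 1), ?_, ?_⟩
  · rw [key]
    have := hg1 ⟨x, Submodule.mem_span_singleton_self x⟩
    simp only at this
    rw [this]
    exact LinearPMap.mkSpanSingleton_apply ℝ _ hx (N x)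
  · intro z
    rw [key]
    exact hg2 z

lemma Supp.perm {m : ℕ} {N : (Fin m → ℝ) → ℝ} (hN : IsSymmLatticeNorm N) {x y : Fin m → ℝ}
    (h : Supp N x y) (π : Equiv.Perm (Fin m)) : Supp N (x ∘ π) (y ∘ π) := by
  refine ⟨?_, fun z => ?_⟩
  · rw [hN.2, ← h.1, comp_equiv_dotProduct_comp_equiv]
  · have : (y ∘ π) ⬝ᵥ z = y ⬝ᵥ (z ∘ π.symm) := by
      rw [← comp_equiv_dotProduct_comp_equiv y (z ∘ π.symm) π]
      congr 1
      ext i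
      simp
    rw [this, ← hN.2 π.symm z]
    exact h.2 _

lemma Supp.sign {m : ℕ} {N : (Fin m → ℝ) → ℝ} (hN : IsSymmLatticeNorm N) {x y : Fin m → ℝ}
    (h : Supp N x y) (e : Fin m → ℝ) (he : ∀ i, e i * e i = 1) : Supp N (e * x) (e * y) := by
  have habs : ∀ i, |e i| = 1 := by
    intro i
    have h1 := abs_mul_abs_self (e i)
    rw [he] at h1
    nlinarith [abs_nonneg (e i)]
  have hNe : ∀ z, N (e * z) = N z := by
    intro z
    rw [hN.1.2.1, hN.1.2.1 z]
    congr 1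
    ext i
    simp [abs_mul, habs]
  refine ⟨?_, fun z => ?_⟩
  · rw [hNe, ← h.1]
    simp only [dotProduct, Pi.mul_apply]
    refine Finset.sum_congr rfl fun i _ => ?_
    linear_combination (y i * x i) * he i
  · rw [← hNe z]
    refine le_trans (le_of_eq ?_) (h.2 _)
    simp only [dotProduct, Pi.mul_apply]
    refine Finset.sum_congr rfl fun i _ => ?_
    ring

/-- extraction of the `i,j` entries of a form vanishing on all support pairs -/
lemma extract {m : ℕ} {N : (Fin m → ℝ) → ℝ} (hN : IsSymmLatticeNorm N)
    (B : Matrix (Fin m) (Fin m) ℝ) (hB : ∀ x y, Supp N x y → y ⬝ᵥ (B.mulVec x) = 0)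
    {i j : Fin m} (hij : i ≠ j) {x y : Fin m → ℝ} (h : Supp N x y) :
    y i * x j * B i j + y j * x i * B j i = 0 := by
  have flip : ∀ (k : Fin m) (x y : Fin m → ℝ), Supp N x y →
      Supp N (x - (2 * x k) • Pi.single k 1) (y - (2 * y k) • Pi.single k 1) := by
    intro k x y hxy
    have h1 := hxy.sign hN (fun l => if l = k then -1 else 1) (by intro l; split_ifs <;> norm_num)
    convert h1 using 1 <;>
    · ext l
      by_cases hl : l = k
      · subst hl; simp; ring
      · simp [hl]
  have h0 := hB _ _ h
  have h1 := hB _ _ (flip i _ _ h)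
  have h2 := hB _ _ (flip j _ _ h)
  have h3 := hB _ _ (flip j _ _ (flip i _ _ h))
  have hji := hij.symm
  simp only [Pi.sub_apply, Pi.smul_apply, Pi.single_eq_of_ne hji, smul_zero, sub_zero,
    Matrix.mulVec_sub, Matrix.mulVec_smul, sub_dotProduct, dotProduct_sub, smul_dotProduct,
    dotProduct_smul, smul_eq_mul, mul_zero, single_dotProduct, Matrix.mulVec_single_one, Matrix.col_apply, one_mul] at h0 h1 h2 h3
  linarith

lemma cos_ineq_const (ψ : ℝ → ℝ) (K : ℝ) (hK : ∀ t, ψ t ≤ K) (h0 : ∀ t, 0 ≤ ψ t)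
    (h : ∀ s t, ψ t * Real.cos (s - t) ≤ ψ s) (s t : ℝ) : ψ s = ψ t := by
  have h1 : ∀ s t, ψ t - ψ s ≤ K * (s - t) ^ 2 := by
    intro s t
    have a := h s t
    have b := Real.one_sub_sq_div_two_le_cos (x := s - t)
    have c : ψ t * (1 - (s - t) ^ 2 / 2) ≤ ψ t * Real.cos (s - t) :=
      mul_le_mul_of_nonneg_left b (h0 t)
    have d : ψ t * (s - t) ^ 2 ≤ K * (s - t) ^ 2 :=
      mul_le_mul_of_nonneg_right (hK t) (sq_nonneg _)
    have e : 0 ≤ ψ t * (s - t) ^ 2 := mul_nonneg (h0 t) (sq_nonneg _)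
    nlinarith
  have hd : ∀ t, HasDerivAt ψ 0 t := by
    intro t
    rw [hasDerivAt_iff_isLittleO]
    have : (fun x' => ψ x' - ψ t - (x' - t) • (0:ℝ)) =O[nhds t] fun x' => (x' - t) ^ 2 := by
      refine Asymptotics.IsBigO.of_bound K (Filter.Eventually.of_forall fun x => ?_)
      simp only [smul_zero, sub_zero, Real.norm_eq_abs]
      rw [abs_of_nonneg (sq_nonneg (x - t)), abs_le]
      have a := h1 x t
      have b := h1 t x
      constructor <;> nlinarith
    refine this.trans_isLittleO ?_
    have h2 : (fun x : ℝ => (x - t) ^ 2) = (fun x : ℝ => (fun y : ℝ => y ^ 2) (x - t)) := rfl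
    have h3 := (Asymptotics.isLittleO_pow_id (𝕜 := ℝ) (n := 2) (by norm_num)).comp_tendsto
      (show Filter.Tendsto (fun x : ℝ => x - t) (nhds t) (nhds 0) by
        have := (show Continuous fun x : ℝ => x - t by fun_prop).tendsto t
        rwa [sub_self] at this)
    exact h3
  exact is_const_of_deriv_eq_zero (fun t => (hd t).differentiableAt) (fun t => (hd t).deriv) s t

lemma euclid_of_ineq {m : ℕ} (hm : 2 ≤ m) {N : (Fin m → ℝ) → ℝ} (hN : IsNorm N)
    (h : ∀ x z : Fin m → ℝ, N x * (x ⬝ᵥ z) ≤ (x ⬝ᵥ x) * N z) :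
    ∃ c : ℝ, 0 < c ∧ ∀ x : Fin m → ℝ, N x = c * Real.sqrt (∑ i, x i ^ 2) := by
  let o : Fin m := ⟨0, by omega⟩
  let e : Fin m → ℝ := Pi.single o 1
  have hee : e ⬝ᵥ e = 1 := by simp [e]
  have he0 : e ≠ 0 := by
    intro h0
    rw [h0] at hee
    simp at hee
  have rot : ∀ b : Fin m → ℝ, e ⬝ᵥ b = 0 → b ⬝ᵥ b = 1 → ∀ t : ℝ,
      N (Real.cos t • e + Real.sin t • b) = N e := by
    intro b heb hbb t
    have hbe : b ⬝ᵥ e = 0 := by rw [dotProduct_comm]; exact heb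
    have dp : ∀ s t : ℝ, (Real.cos t • e + Real.sin t • b) ⬝ᵥ (Real.cos s • e + Real.sin s • b)
        = Real.cos (s - t) := by
      intro s t
      simp only [add_dotProduct, dotProduct_add, smul_dotProduct, dotProduct_smul, hee, heb, hbe,
        hbb, smul_eq_mul, Real.cos_sub]
      ring
    have := cos_ineq_const (fun t => N (Real.cos t • e + Real.sin t • b)) (N e + N b)
      (fun t => by
        refine (hN.2.2 _ _).trans ?_
        rw [hN.2.1, hN.2.1]
        have := mul_le_mul_of_nonneg_right (Real.abs_cos_le_one t) (hN.nonneg e)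
        have := mul_le_mul_of_nonneg_right (Real.abs_sin_le_one t) (hN.nonneg b)
        linarith)
      (fun t => hN.nonneg _)
      (fun s t => by
        have := h (Real.cos t • e + Real.sin t • b) (Real.cos s • e + Real.sin s • b)
        rw [dp, dp] at this
        simpa using this) t 0
    simpa using this
  refine ⟨N e, hN.pos he0, fun x => ?_⟩
  have hxx : ∑ i, x i ^ 2 = x ⬝ᵥ x := by simp [dotProduct, sq]
  rw [hxx]
  let b := x - x o • e
  have heb : e ⬝ᵥ b = 0 := by simp [b, e, dotProduct_sub]
  have hbe : b ⬝ᵥ e = 0 := by rw [dotProduct_comm]; exact heb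
  have hx : x = x o • e + b := by simp [b]
  have hsq : x ⬝ᵥ x = x o ^ 2 + b ⬝ᵥ b := by
    conv_lhs => rw [hx]
    simp only [add_dotProduct, dotProduct_add, smul_dotProduct, dotProduct_smul, hee, heb, hbe,
        smul_eq_mul]
    ring
  by_cases hb : b = 0
  · rw [hsq, hb]
    rw [hb, add_zero] at hx
    rw [hx, hN.2.1]
    simp [e, Real.sqrt_sq_eq_abs, mul_comm]
  · have hbpos : 0 < b ⬝ᵥ b := by
      have h1 : 0 ≤ b ⬝ᵥ b := Finset.sum_nonneg fun i _ => mul_self_nonneg _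
      refine lt_of_le_of_ne h1 (fun h2 => hb (dotProduct_self_eq_zero.1 h2.symm))
    set β := Real.sqrt (b ⬝ᵥ b) with hβ
    have hβpos : 0 < β := Real.sqrt_pos.2 hbpos
    have hβsq : β ^ 2 = b ⬝ᵥ b := Real.sq_sqrt hbpos.le
    let z : ℂ := ⟨x o, β⟩
    have hz : ‖z‖ = Real.sqrt (x ⬝ᵥ x) := by
      rw [hsq, ← hβsq, Complex.norm_def, Complex.normSq_apply]
      simp [z, sq]
    have h1 : ‖z‖ * Real.cos z.arg = x o := Complex.norm_mul_cos_arg z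
    have h2 : ‖z‖ * Real.sin z.arg = β := Complex.norm_mul_sin_arg z
    have h3 := rot (β⁻¹ • b) (by rw [dotProduct_smul, heb, smul_zero]) (by
      rw [dotProduct_smul, smul_dotProduct, ← hβsq, smul_eq_mul, smul_eq_mul]
      field_simp) z.arg
    have h4 : x = ‖z‖ • (Real.cos z.arg • e + Real.sin z.arg • β⁻¹ • b) := by
      rw [smul_add, smul_smul, smul_smul, smul_smul, h1, h2, mul_inv_cancel₀ hβpos.ne', one_smul]
      exact hx
    conv_lhs => rw [h4]
    rw [hN.2.1, h3, ← hz, abs_of_nonneg (norm_nonneg z), mul_comm]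

/-- If a form vanishes on all support pairs then either `B` is diagonal or `N` is Euclidean. -/
lemma form_diag {m : ℕ} (hm : 2 ≤ m) {N : (Fin m → ℝ) → ℝ} (hN : IsSymmLatticeNorm N)
    (hN2 : ¬ ∃ c : ℝ, 0 < c ∧ ∀ x : Fin m → ℝ, N x = c * Real.sqrt (∑ i, x i ^ 2))
    (B : Matrix (Fin m) (Fin m) ℝ) (hB : ∀ x y, Supp N x y → y ⬝ᵥ (B.mulVec x) = 0)
    {i j : Fin m} (hij : i ≠ j) : B i j = 0 := by
  by_contra hne
  apply hN2
  have hNn : IsNorm N := hN.1.1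
  have E1 : ∀ x y, Supp N x y → y i * x j * B i j + y j * x i * B j i = 0 :=
    fun x y h => extract hN B hB hij h
  have E2 : ∀ x y, Supp N x y → y j * x i * B i j + y i * x j * B j i = 0 := by
    intro x y h
    have := E1 _ _ (h.perm hN (Equiv.swap i j))
    simpa using this
  have hsum : B i j + B j i = 0 := by
    let w : Fin m → ℝ := Pi.single i 1 + Pi.single j 1
    have wi : w i = 1 := by simp [w, hij]
    have wj : w j = 1 := by simp [w, hij.symm]
    have hw : w ≠ 0 := fun h0 => by rw [h0] at wi; simp at wi
    obtain ⟨y, hy⟩ := exists_supp hNn w hw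
    have h1 := E1 _ _ hy
    have h2 := E2 _ _ hy
    rw [wi, wj] at h1 h2
    have h3 : y i + y j = N w := by
      rw [← hy.1]; simp [w, dotProduct_add]
    have h4 := hNn.pos hw
    have h5 : (y i + y j) * (B i j + B j i) = 0 := by linarith
    rcases mul_eq_zero.1 h5 with h6 | h6
    · linarith
    · exact h6
  have E3 : ∀ x y, Supp N x y → y i * x j = y j * x i := by
    intro x y h
    have h1 := E1 x y h
    have h2 : (y i * x j - y j * x i) * B i j = 0 := by
      linear_combination h1 - (y j * x i) * hsum
    rcases mul_eq_zero.1 h2 with h3 | h3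
    · linarith
    · exact absurd h3 hne
  have E4 : ∀ x y, Supp N x y → ∀ k l, y k * x l = y l * x k := by
    intro x y h k l
    by_cases hkl : k = l
    · subst hkl; rfl
    obtain ⟨π, hπi, hπj⟩ : ∃ π : Equiv.Perm (Fin m), π i = k ∧ π j = l := by
      refine ⟨(Equiv.swap i k).trans (Equiv.swap (Equiv.swap i k j) l), ?_, ?_⟩
      · rw [Equiv.trans_apply, Equiv.swap_apply_left]
        refine Equiv.swap_apply_of_ne_of_ne ?_ hkl
        intro h
        apply hij
        have := congrArg (Equiv.swap i k) h
        simpa using this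
      · simp
    have := E3 _ _ (h.perm hN π)
    simpa [hπi, hπj] using this
  refine euclid_of_ineq hm hNn fun x z => ?_
  by_cases hx : x = 0
  · subst hx; simp
  obtain ⟨y, hy⟩ := exists_supp hNn x hx
  have h1 : ∀ k, (x ⬝ᵥ x) * y k = N x * x k := by
    intro k
    rw [← hy.1]
    simp only [dotProduct, Finset.sum_mul]
    refine Finset.sum_congr rfl fun l _ => ?_
    linear_combination (x l) * E4 x y hy k l
  have h2 : N x * (x ⬝ᵥ z) = (x ⬝ᵥ x) * (y ⬝ᵥ z) := by
    rw [← smul_eq_mul, ← smul_eq_mul, ← smul_dotProduct, ← smul_dotProduct]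
    congr 1
    ext k
    simp [h1]
  rw [h2]
  exact mul_le_mul_of_nonneg_left (hy.2 z) (Finset.sum_nonneg fun i _ => mul_self_nonneg _)

lemma trig_zero (b c : ℝ) (h : ∀ t : ℝ, (Real.cos t - 1) * b + Real.sin t * c ≤ 0) : c = 0 := by
  have hd : HasDerivAt (fun t : ℝ => (Real.cos t - 1) * b + Real.sin t * c)
      ((-Real.sin 0) * b + Real.cos 0 * c) 0 :=
    (((Real.hasDerivAt_cos 0).sub_const 1).mul_const b).add ((Real.hasDerivAt_sin 0).mul_const c)
  have hmax : IsLocalMax (fun t : ℝ => (Real.cos t - 1) * b + Real.sin t * c) 0 :=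
    Filter.Eventually.of_forall fun t => by simpa using h t
  simpa using hmax.hasDerivAt_eq_zero hd

section HilbertPart

variable {H : Type*} [NormedAddCommGroup H] [InnerProductSpace ℝ H]

/-- infinitesimal rotation in the plane of `u, v` -/
noncomputable def rotJ (u v : H) : H →ₗ[ℝ] H :=
  (innerₛₗ ℝ u).smulRight v - (innerₛₗ ℝ v).smulRight u

lemma rotJ_apply (u v w : H) : rotJ u v w = ⟪u, w⟫ • v - ⟪v, w⟫ • u := by
  simp [rotJ]

lemma rot_norm {u v : H} (hu : ‖u‖ = 1) (hv : ‖v‖ = 1) (huv : ⟪u, v⟫ = 0) (w : H) (t : ℝ) :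
    ‖w + ((Real.cos t - 1) • (⟪u, w⟫ • u + ⟪v, w⟫ • v) + Real.sin t • rotJ u v w)‖ = ‖w‖ := by
  rw [rotJ_apply]
  have huu : ⟪u, u⟫ = 1 := by rw [real_inner_self_eq_norm_sq, hu]; norm_num
  have hvv : ⟪v, v⟫ = 1 := by rw [real_inner_self_eq_norm_sq, hv]; norm_num
  have hvu : ⟪v, u⟫ = 0 := by rw [real_inner_comm]; exact huv
  have hwu : ⟪w, u⟫ = ⟪u, w⟫ := real_inner_comm _ _
  have hwv : ⟪w, v⟫ = ⟪v, w⟫ := real_inner_comm _ _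
  rw [← sq_eq_sq₀ (norm_nonneg _) (norm_nonneg _), ← real_inner_self_eq_norm_sq,
    ← real_inner_self_eq_norm_sq]
  simp only [inner_add_left, inner_add_right, inner_sub_left, inner_sub_right,
    real_inner_smul_left, real_inner_smul_right, huu, hvv, huv, hvu, hwu, hwv]
  linear_combination (⟪u, w⟫ ^ 2 + ⟪v, w⟫ ^ 2) * Real.sin_sq_add_cos_sq t

lemma gen_zero {m : ℕ} {N : (Fin m → ℝ) → ℝ} (hN : IsSymmLatticeNorm N)
    (T : (Fin m → H) →ₗ[ℝ] (Fin m → H))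
    (hTiso : ∀ f : Fin m → H, N (fun i => ‖T f i‖) = N fun i => ‖f i‖)
    {u v : H} (hu : ‖u‖ = 1) (hv : ‖v‖ = 1) (huv : ⟪u, v⟫ = 0) (i : Fin m)
    (h : Fin m → H) (hh : ∀ l, ‖h l‖ = 1) {x y : Fin m → ℝ} (hxy : Supp N x y)
    (g : Fin m → H) (hg : T g = fun l => x l • h l) :
    ∑ l, y l * ⟪T (Pi.single i (rotJ u v (g i))) l, h l⟫ = 0 := by
  set F : (Fin m → H) → ℝ := fun f => ∑ l, y l * ⟪f l, h l⟫ with hF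
  have Fadd : ∀ f f', F (f + f') = F f + F f' := by
    intro f f'
    simp only [hF, Pi.add_apply, inner_add_left, mul_add, Finset.sum_add_distrib]
  have Fsmul : ∀ (c : ℝ) f, F (c • f) = c * F f := by
    intro c f
    simp only [hF, Pi.smul_apply, real_inner_smul_left, Finset.mul_sum]
    exact Finset.sum_congr rfl fun l _ => by ring
  have Fle : ∀ f, F f ≤ N (fun l => ‖f l‖) := by
    intro f
    refine le_trans (b := N (fun l => ⟪f l, h l⟫)) (hxy.2 _) (hN.1.2.2 _ _ fun l => ?_)
    rw [abs_norm]
    have := abs_real_inner_le_norm (f l) (h l)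
    rwa [hh, mul_one] at this
  have Fg : F (T g) = N x := by
    rw [← hxy.1, hg]
    simp [hF, real_inner_smul_left, dotProduct, hh]
  have Ng : N (fun l => ‖g l‖) = N x := by
    rw [← hTiso g, hg, hN.1.2.1 x]
    simp [norm_smul, hh]
  refine trig_zero (F (T (Pi.single i (⟪u, g i⟫ • u + ⟪v, g i⟫ • v)))) _ fun t => ?_
  have h1 := Fle (T (g + ((Real.cos t - 1) • (Pi.single i (⟪u, g i⟫ • u + ⟪v, g i⟫ • v) : Fin m → H) +
    Real.sin t • (Pi.single i (rotJ u v (g i)) : Fin m → H))))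
  rw [hTiso] at h1
  have h2 : (fun l => ‖(g + ((Real.cos t - 1) • (Pi.single i (⟪u, g i⟫ • u + ⟪v, g i⟫ • v) : Fin m → H) +
    Real.sin t • (Pi.single i (rotJ u v (g i)) : Fin m → H)) : Fin m → H) l‖) = fun l => ‖g l‖ := by
    ext l
    by_cases hl : l = i
    · subst hl
      simpa using rot_norm hu hv huv (g l) t
    · simp [hl]
  rw [h2, Ng, map_add, map_add, map_smul, map_smul, Fadd, Fadd, Fsmul, Fsmul, Fg] at h1
  linarith

lemma single_coord {m : ℕ} (hm : 2 ≤ m) {N : (Fin m → ℝ) → ℝ} (hN : IsSymmLatticeNorm N)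
    (hN2 : ¬ ∃ c : ℝ, 0 < c ∧ ∀ x : Fin m → ℝ, N x = c * Real.sqrt (∑ i, x i ^ 2))
    (T : (Fin m → H) ≃ₗ[ℝ] (Fin m → H))
    (hTiso : ∀ f : Fin m → H, N (fun i => ‖T f i‖) = N fun i => ‖f i‖)
    {u v : H} (hu : ‖u‖ = 1) (hv : ‖v‖ = 1) (huv : ⟪u, v⟫ = 0) (i j : Fin m)
    (hj : T (Pi.single i u) j ≠ 0) (l : Fin m) (hl : l ≠ j) :
    T (Pi.single i u) l = 0 ∧ T (Pi.single i v) l = 0 := by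
  let A : (Fin m → H) →ₗ[ℝ] (Fin m → H) :=
    T.toLinearMap ∘ₗ LinearMap.single ℝ (fun _ => H) i ∘ₗ rotJ u v ∘ₗ LinearMap.proj i ∘ₗ
      T.symm.toLinearMap
  have hA : ∀ f, A f = T (Pi.single i (rotJ u v (T.symm f i))) := fun f => rfl
  have huu : ⟪u, u⟫ = 1 := by rw [real_inner_self_eq_norm_sq, hu]; norm_num
  have hvv : ⟪v, v⟫ = 1 := by rw [real_inner_self_eq_norm_sq, hv]; norm_num
  have hvu : ⟪v, u⟫ = 0 := by rw [real_inner_comm]; exact huv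
  set p := T (Pi.single i u) with hp
  set q := T (Pi.single i v) with hq
  have Ap : A p = q := by
    rw [hA, hp, T.symm_apply_apply, Pi.single_eq_same, rotJ_apply, huu, hvu]
    simp [hq]
  have Aq : A q = -p := by
    rw [hA, hq, T.symm_apply_apply, Pi.single_eq_same, rotJ_apply, hvv, huv, zero_smul, one_smul,
      zero_sub, Pi.single_neg, map_neg]
  have Aspan : ∀ f, ∃ α β : ℝ, A f = α • p + β • q := by
    intro f
    refine ⟨-⟪v, T.symm f i⟫, ⟪u, T.symm f i⟫, ?_⟩
    rw [hA, rotJ_apply, Pi.single_sub, Pi.single_smul, Pi.single_smul, map_sub, map_smul, map_smul]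
    module
  -- off-diagonal blocks vanish
  have offd : ∀ a b : Fin m, a ≠ b → ∀ k : H, A (Pi.single b k) a = 0 := by
    have unit : ∀ a b : Fin m, a ≠ b → ∀ k : H, ‖k‖ = 1 → A (Pi.single b k) a = 0 := by
      intro a b hab k hk
      by_contra hne
      set w := A (Pi.single b k) a with hw
      have hwn : ‖w‖ ≠ 0 := norm_ne_zero_iff.2 hne
      let h : Fin m → H := Function.update (fun _ => k) a (‖w‖⁻¹ • w)
      have hh : ∀ l, ‖h l‖ = 1 := by
        intro l
        by_cases hl : l = a
        · subst hl
          simp [h, norm_smul, hwn]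
        · simp [h, hl, hk]
      have hb : h b = k := by simp [h, hab.symm]
      have ha : h a = ‖w‖⁻¹ • w := by simp [h]
      have key := form_diag hm hN hN2
        (Matrix.of fun r s => ⟪A (Pi.single s (h s)) r, h r⟫) (by
          intro x y hxy
          have h1 := gen_zero hN T.toLinearMap hTiso hu hv huv i h hh hxy
            (T.symm fun l => x l • h l) (by simp)
          have h2 : (fun l => x l • h l) = ∑ s, x s • (Pi.single s (h s) : Fin m → H) := by
            ext l
            simp [Finset.sum_apply, Pi.single_apply]
          rw [← h1]
          simp only [dotProduct]
          refine Finset.sum_congr rfl fun r _ => ?_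
          congr 1
          change _ = ⟪A (fun l => x l • h l) r, h r⟫
          rw [h2, map_sum, Finset.sum_apply, sum_inner]
          simp only [Matrix.mulVec, dotProduct, Matrix.of_apply, map_smul, Pi.smul_apply,
            real_inner_smul_left]
          exact Finset.sum_congr rfl fun s _ => by ring) hab
      rw [Matrix.of_apply, hb, ha, ← hw, real_inner_smul_right, real_inner_self_eq_norm_sq] at key
      rcases mul_eq_zero.1 key with h1 | h1
      · exact hwn (inv_eq_zero.1 h1)
      · exact hwn (pow_eq_zero_iff (by norm_num) |>.1 h1)
    intro a b hab k
    by_cases hk : k = 0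
    · subst hk; simp
    have hkn : ‖k‖ ≠ 0 := norm_ne_zero_iff.2 hk
    have h1 := unit a b hab (‖k‖⁻¹ • k) (by simp [norm_smul, hkn])
    rw [Pi.single_smul, map_smul, Pi.smul_apply, smul_eq_zero] at h1
    rcases h1 with h1 | h1
    · exact absurd (inv_eq_zero.1 h1) hkn
    · exact h1
  have diag : ∀ (f : Fin m → H) a, A f a = A (Pi.single a (f a)) a := by
    intro f a
    have h2 : f = ∑ s, (Pi.single s (f s) : Fin m → H) := (Finset.univ_sum_single f).symm
    conv_lhs => rw [h2]
    rw [map_sum, Finset.sum_apply]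
    exact Finset.sum_eq_single a (fun s _ hs => offd a s hs.symm _) (by simp)
  obtain ⟨α, β, hαβ⟩ := Aspan (Pi.single j (q j))
  have hjj : A (Pi.single j (q j)) j = - p j := by
    rw [← diag, Aq]; rfl
  have hl0 : α • p l + β • q l = 0 := by
    have := offd l j hl (q j)
    rw [hαβ] at this
    exact this
  have hl1 : α • q l - β • p l = 0 := by
    have h1 : A (α • p + β • q) l = 0 := by
      rw [diag]
      have : (α • p + β • q) l = 0 := hl0
      rw [this]; simp
    rw [map_add, map_smul, map_smul, Ap, Aq] at h1
    have : α • q l + β • (-p l) = 0 := h1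
    rw [← this]; module
  have hpl : (α ^ 2 + β ^ 2) • p l = 0 := by
    have : (α ^ 2 + β ^ 2) • p l = α • (α • p l + β • q l) - β • (α • q l - β • p l) := by module
    rw [this, hl0, hl1]; simp
  have hp0 : p l = 0 := by
    rcases smul_eq_zero.1 hpl with h1 | h1
    · exfalso
      have ha : α = 0 := by nlinarith [sq_nonneg α, sq_nonneg β]
      have hb : β = 0 := by nlinarith [sq_nonneg α, sq_nonneg β]
      rw [hαβ, ha, hb] at hjj
      apply hj
      simpa using hjj.symm
    · exact h1
  refine ⟨hp0, ?_⟩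
  rw [← Ap, diag, hp0]
  simp

end HilbertPart

theorem isometries_of_finite_symmetric_space_valued_in_hilbert
    {m : ℕ} (hm : 2 ≤ m) (N : (Fin m → ℝ) → ℝ)
    (hN : IsSymmLatticeNorm N)
    (hN2 : ¬ ∃ c : ℝ, 0 < c ∧ ∀ x : Fin m → ℝ, N x = c * Real.sqrt (∑ i, x i ^ 2))
    {H : Type*} [NormedAddCommGroup H] [InnerProductSpace ℝ H] [CompleteSpace H]
    [TopologicalSpace.SeparableSpace H] (hdim : 2 ≤ Module.rank ℝ H)
    (T : (Fin m → H) →ₗ[ℝ] (Fin m → H))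
    (hTsurj : Function.Surjective T)
    (hTiso : ∀ f : Fin m → H, N (fun i => ‖T f i‖) = N fun i => ‖f i‖) :
    ∃ (σ : Equiv.Perm (Fin m)) (a : Fin m → ℝ) (S : Fin m → (H →ₗ[ℝ] H)),
      (∀ i, |a i| = 1) ∧
      (∀ i, Function.Surjective (S i)) ∧
      (∀ i (h : H), ‖S i h‖ = ‖h‖) ∧
      ∀ (f : Fin m → H) (i : Fin m), T f i = a i • S i (f (σ i)) := by
  have hNn : IsNorm N := hN.1.1
  have hTinj : Function.Injective T := by
    rw [← LinearMap.ker_eq_bot, LinearMap.ker_eq_bot']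
    intro f hf
    have h1 := hTiso f
    rw [hf] at h1
    have h2 : (fun i : Fin m => ‖(0 : Fin m → H) i‖) = 0 := by ext i; simp
    rw [h2, (hNn.1 0).2 rfl] at h1
    have h3 := (hNn.1 _).1 h1.symm
    ext i
    simpa using congrFun h3 i
  let e : (Fin m → H) ≃ₗ[ℝ] (Fin m → H) := LinearEquiv.ofBijective T ⟨hTinj, hTsurj⟩
  have he : ∀ f, e f = T f := fun f => rfl
  have hnt : Nontrivial H := by
    rw [← rank_pos_iff_nontrivial (R := ℝ)]
    exact lt_of_lt_of_le (by norm_num) hdim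
  obtain ⟨u, hu⟩ := exists_norm_eq H (zero_le_one (α := ℝ))
  have hu0 : u ≠ 0 := by intro h; rw [h] at hu; simp at hu
  -- orthogonal companion
  have ex : ∀ w : H, ∃ (v : H) (a b : ℝ), ‖v‖ = 1 ∧ ⟪u, v⟫ = 0 ∧ w = a • u + b • v := by
    have aux : ∀ w : H, w - ⟪u, w⟫ • u ≠ 0 →
        ∃ (v : H) (a b : ℝ), ‖v‖ = 1 ∧ ⟪u, v⟫ = 0 ∧ w = a • u + b • v := by
      intro w hw
      set w' := w - ⟪u, w⟫ • u with hw'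
      have hn : ‖w'‖ ≠ 0 := norm_ne_zero_iff.2 hw
      refine ⟨‖w'‖⁻¹ • w', ⟪u, w⟫, ‖w'‖, by simp [norm_smul, hn], ?_, ?_⟩
      · rw [real_inner_smul_right, hw', inner_sub_right, real_inner_smul_right,
          real_inner_self_eq_norm_sq, hu]
        simp
      · rw [smul_smul, mul_inv_cancel₀ hn, one_smul, hw']
        abel
    obtain ⟨w0, hw0⟩ : ∃ w0 : H, w0 - ⟪u, w0⟫ • u ≠ 0 := by
      by_contra! hcon
      have : Module.rank ℝ H ≤ 1 := by
        rw [rank_le_one_iff]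
        exact ⟨u, fun w => ⟨⟪u, w⟫, (sub_eq_zero.1 (hcon w)).symm⟩⟩
      have h3 := hdim.trans this
      norm_num at h3
    intro w
    by_cases hw : w - ⟪u, w⟫ • u = 0
    · obtain ⟨v, _, _, hv, huv, _⟩ := aux w0 hw0
      exact ⟨v, ⟪u, w⟫, 0, hv, huv, by rw [zero_smul, add_zero]; exact sub_eq_zero.1 hw⟩
    · exact aux w hw
  have hτ : ∀ i, ∃ j, ∀ (h : H) (l : Fin m), l ≠ j → T (Pi.single i h) l = 0 := by
    intro i
    obtain ⟨j, hj⟩ : ∃ j, T (Pi.single i u) j ≠ 0 := by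
      by_contra! hcon
      have h1 : T (Pi.single i u) = T 0 := by rw [map_zero]; exact funext hcon
      have h2 := congrFun (hTinj h1) i
      simp at h2
      exact hu0 h2
    refine ⟨j, fun h l hl => ?_⟩
    obtain ⟨v, a, b, hv, huv, rfl⟩ := ex h
    obtain ⟨h1, h2⟩ := single_coord hm hN hN2 e hTiso hu hv huv i j hj l hl
    rw [he] at h1 h2
    rw [Pi.single_add, Pi.single_smul, Pi.single_smul, map_add, map_smul, map_smul]
    simp [h1, h2]
  choose τ hτ using hτ
  have hτsurj : Function.Surjective τ := by
    intro j
    by_contra! hcon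
    obtain ⟨f, hf⟩ := hTsurj (Pi.single j u)
    have h1 : T f j = 0 := by
      rw [← Finset.univ_sum_single f, map_sum, Finset.sum_apply]
      exact Finset.sum_eq_zero fun s _ => hτ s _ j (hcon s).symm
    rw [hf, Pi.single_eq_same] at h1
    exact hu0 h1
  let τe : Equiv.Perm (Fin m) := Equiv.ofBijective τ (Finite.injective_iff_bijective.1
    (Finite.injective_iff_surjective.2 hτsurj))
  have hτe : ∀ i, τe i = τ i := fun i => rfl
  have hform : ∀ (f : Fin m → H) j, T f j = T (Pi.single (τe.symm j) (f (τe.symm j))) j := by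
    intro f j
    conv_lhs => rw [← Finset.univ_sum_single f]
    rw [map_sum, Finset.sum_apply]
    refine Finset.sum_eq_single (τe.symm j) (fun s _ hs => hτ s _ j ?_) (by simp)
    intro h
    apply hs
    rw [h, ← hτe, Equiv.symm_apply_apply]
  have hNs : ∀ (i : Fin m) (c : ℝ), N (Pi.single i c) = |c| * N (Pi.single i 1) := by
    intro i c
    rw [← hNn.2.1]
    congr 1
    ext l
    simp [Pi.single_apply]
  have hNij : ∀ i j : Fin m, N (Pi.single i 1) = N (Pi.single j 1) := by
    intro i j
    rw [← hN.2 (Equiv.swap i j) (Pi.single i 1)]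
    congr 1
    ext l
    simp only [Function.comp, Pi.single_apply]
    congr 1
    rw [Equiv.swap_apply_eq_iff]
    simp
  refine ⟨τe.symm, fun _ => 1, fun j => LinearMap.proj j ∘ₗ T ∘ₗ
    LinearMap.single ℝ (fun _ => H) (τe.symm j), by simp, ?_, ?_, ?_⟩
  · intro j k
    obtain ⟨f, hf⟩ := hTsurj (Pi.single j k)
    refine ⟨f (τe.symm j), ?_⟩
    change T (Pi.single (τe.symm j) (f (τe.symm j))) j = k
    rw [← hform, hf, Pi.single_eq_same]
  · intro j h
    change ‖T (Pi.single (τe.symm j) h) j‖ = ‖h‖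
    have h1 := hTiso (Pi.single (τe.symm j) h)
    have h2 : (fun l => ‖T (Pi.single (τe.symm j) h) l‖) =
        Pi.single j ‖T (Pi.single (τe.symm j) h) j‖ := by
      ext l
      by_cases hl : l = j
      · subst hl; simp
      · rw [Pi.single_eq_of_ne hl, hτ _ _ _ (by rw [← hτe, Equiv.apply_symm_apply]; exact hl),
          norm_zero]
    have h3 : (fun l => ‖(Pi.single (τe.symm j) h : Fin m → H) l‖) =
        Pi.single (τe.symm j) ‖h‖ := by
      ext l
      by_cases hl : l = τe.symm j
      · subst hl; simp
      · simp [hl]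
    rw [h2, h3, hNs, hNs (τe.symm j), hNij (τe.symm j) j, abs_norm, abs_norm] at h1
    have hpos : N (Pi.single j 1) ≠ 0 := by
      refine (hNn.pos ?_).ne'
      intro h0
      have := congrFun h0 j
      simp at this
    exact mul_right_cancel₀ hpos h1
  · intro f j
    rw [one_smul]
    exact hform f j
end

section
/- Let 1 ≤ p < ∞ with p ≠ 2, and let H be a separable real Hilbert space with dim H ≥ 2. Let T be a surjective linear isometry of the space ℓ^p(ℕ; H) of p-summable H-valued sequences (with norm ‖f‖ = (∑_n ‖f n‖_H^p)^{1/p}). Then there exist a permutation σ of ℕ, a map a : ℕ → ℝ with |a n| = 1 for every n, and a family S : ℕ → (H → H) of surjective linear isometries of H, such that for every f ∈ ℓ^p(ℕ; H) and every n, (T f) n = a n • S n (f (σ n)). -/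
open scoped ENNReal

namespace LpIso

lemma sub_strict {q a b : ℝ} (hq1 : q < 1) (ha : 0 < a) (hb : 0 < b) :
    (a + b) ^ q < a ^ q + b ^ q := by
  have h1 : (a + b) ^ (q - 1) < a ^ (q - 1) :=
    Real.rpow_lt_rpow_of_neg ha (by linarith) (by linarith)
  have h2 : (a + b) ^ (q - 1) < b ^ (q - 1) :=
    Real.rpow_lt_rpow_of_neg hb (by linarith) (by linarith)
  have e : ∀ x : ℝ, 0 < x → x ^ q = x * x ^ (q - 1) := fun x hx => by
    rw [Real.rpow_sub_one hx.ne']; field_simp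
  rw [e a ha, e b hb, e (a + b) (by linarith)]
  nlinarith [mul_lt_mul_of_pos_left h1 ha, mul_lt_mul_of_pos_left h2 hb]

lemma super_strict {q a b : ℝ} (hq1 : 1 < q) (ha : 0 < a) (hb : 0 < b) :
    a ^ q + b ^ q < (a + b) ^ q := by
  have h1 : a ^ (q - 1) < (a + b) ^ (q - 1) :=
    Real.rpow_lt_rpow ha.le (by linarith) (by linarith)
  have h2 : b ^ (q - 1) < (a + b) ^ (q - 1) :=
    Real.rpow_lt_rpow hb.le (by linarith) (by linarith)
  have e : ∀ x : ℝ, 0 < x → x ^ q = x * x ^ (q - 1) := fun x hx => by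
    rw [Real.rpow_sub_one hx.ne']; field_simp
  rw [e a ha, e b hb, e (a + b) (by linarith)]
  nlinarith [mul_lt_mul_of_pos_left h1 ha, mul_lt_mul_of_pos_left h2 hb]

section
variable {H : Type*} [NormedAddCommGroup H] [InnerProductSpace ℝ H]

/-- The Clarkson defect. -/
noncomputable def D (P : ℝ) (u v : H) : ℝ :=
  ‖u + v‖ ^ P + ‖u - v‖ ^ P - 2 * ‖u‖ ^ P - 2 * ‖v‖ ^ P

lemma D_zero {P : ℝ} (hP : 0 < P) (u v : H) (h : u = 0 ∨ v = 0) : D P u v = 0 := by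
  rcases h with rfl | rfl
  · simp [D, Real.zero_rpow hP.ne']; ring
  · simp [D, Real.zero_rpow hP.ne']; ring

lemma rpow_half (P : ℝ) (u : H) : ‖u‖ ^ P = (‖u‖ ^ 2) ^ (P / 2) := by
  rw [← Real.rpow_natCast, ← Real.rpow_mul (norm_nonneg _)]
  congr 1; push_cast; ring

lemma D_neg {P : ℝ} (hP : 0 < P) (hP2 : P < 2) (u v : H) (hu : u ≠ 0) (hv : v ≠ 0) :
    D P u v < 0 := by
  have hq1 : P / 2 < 1 := by linarith
  have hs := sub_strict hq1 (a := ‖u‖ ^ 2) (b := ‖v‖ ^ 2) (by positivity) (by positivity)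
  have hc := (Real.concaveOn_rpow (p := P / 2) (by linarith) (by linarith)).2
    (Set.mem_Ici.2 (sq_nonneg ‖u + v‖))
    (Set.mem_Ici.2 (sq_nonneg ‖u - v‖)) (show (0 : ℝ) ≤ 1 / 2 by norm_num)
    (show (0 : ℝ) ≤ 1 / 2 by norm_num) (by norm_num)
  have e : (1 / 2 : ℝ) • ‖u + v‖ ^ 2 + (1 / 2 : ℝ) • ‖u - v‖ ^ 2 = ‖u‖ ^ 2 + ‖v‖ ^ 2 := by
    have := parallelogram_law_with_norm ℝ u v
    simp only [smul_eq_mul]; nlinarith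
  rw [e] at hc
  simp only [smul_eq_mul] at hc
  simp only [D, rpow_half P]
  linarith

lemma D_pos {P : ℝ} (hP2 : 2 < P) (u v : H) (hu : u ≠ 0) (hv : v ≠ 0) :
    0 < D P u v := by
  have hq1 : 1 < P / 2 := by linarith
  have hs := super_strict hq1 (a := ‖u‖ ^ 2) (b := ‖v‖ ^ 2) (by positivity) (by positivity)
  have hc := (convexOn_rpow (p := P / 2) (by linarith)).2
    (Set.mem_Ici.2 (sq_nonneg ‖u + v‖))
    (Set.mem_Ici.2 (sq_nonneg ‖u - v‖)) (show (0 : ℝ) ≤ 1 / 2 by norm_num)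
    (show (0 : ℝ) ≤ 1 / 2 by norm_num) (by norm_num)
  have e : (1 / 2 : ℝ) • ‖u + v‖ ^ 2 + (1 / 2 : ℝ) • ‖u - v‖ ^ 2 = ‖u‖ ^ 2 + ‖v‖ ^ 2 := by
    have := parallelogram_law_with_norm ℝ u v
    simp only [smul_eq_mul]; nlinarith
  rw [e] at hc
  simp only [smul_eq_mul] at hc
  simp only [D, rpow_half P]
  linarith

variable {p : ℝ≥0∞} [Fact (1 ≤ p)]

lemma hasSum_D (hp : 0 < p.toReal) (f g : lp (fun _ : ℕ => H) p) :
    HasSum (fun n => D p.toReal (f n) (g n))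
      (‖f + g‖ ^ p.toReal + ‖f - g‖ ^ p.toReal - 2 * ‖f‖ ^ p.toReal - 2 * ‖g‖ ^ p.toReal) :=
  (((lp.hasSum_norm hp (f + g)).add (lp.hasSum_norm hp (f - g))).sub
    ((lp.hasSum_norm hp f).mul_left 2)).sub ((lp.hasSum_norm hp g).mul_left 2)

lemma disj_of_iso (hp : 0 < p.toReal) (hp2 : p.toReal ≠ 2)
    (T : lp (fun _ : ℕ => H) p →ₗ[ℝ] lp (fun _ : ℕ => H) p)
    (hTiso : ∀ f, ‖T f‖ = ‖f‖) (f g : lp (fun _ : ℕ => H) p)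
    (h : ∀ n, f n = 0 ∨ g n = 0) (n : ℕ) : T f n = 0 ∨ T g n = 0 := by
  have h1 := hasSum_D hp f g
  have h2 := hasSum_D hp (T f) (T g)
  rw [← map_add, ← map_sub, hTiso, hTiso, hTiso, hTiso] at h2
  have h3 : (fun n => D p.toReal (f n) (g n)) = fun _ => 0 :=
    funext fun n => D_zero hp _ _ (h n)
  rw [h3] at h1
  rw [h1.unique hasSum_zero] at h2
  by_contra! hc
  rcases lt_or_gt_of_ne hp2 with hlt | hgt
  · have hn : ∀ u v : H, 0 ≤ - D p.toReal u v := fun u v => by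
      by_cases hh : u = 0 ∨ v = 0
      · rw [D_zero hp u v hh]; simp
      · push Not at hh
        have := D_neg hp hlt u v hh.1 hh.2
        linarith
    have h4 := h2.neg
    rw [neg_zero] at h4
    have h5 := congrFun ((hasSum_zero_iff_of_nonneg (fun n => hn _ _)).1 h4) n
    have := D_neg hp hlt _ _ hc.1 hc.2
    simp at h5
    linarith
  · have hn : ∀ u v : H, 0 ≤ D p.toReal u v := fun u v => by
      by_cases hh : u = 0 ∨ v = 0
      · rw [D_zero hp u v hh]
      · push Not at hh
        exact (D_pos hgt u v hh.1 hh.2).le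
    have h5 := congrFun ((hasSum_zero_iff_of_nonneg (fun n => hn _ _)).1 h2) n
    have := D_pos hgt _ _ hc.1 hc.2
    simp at h5
    linarith

/-- single -/
noncomputable abbrev sg (p : ℝ≥0∞) [Fact (1 ≤ p)] (n : ℕ) (h : H) : lp (fun _ : ℕ => H) p :=
  lp.single p n h

lemma sg_self (n : ℕ) (h : H) : sg p n h n = h := by simp [sg]

lemma sg_ne {n m : ℕ} (hm : m ≠ n) (h : H) : sg p n h m = 0 := by
  simp [sg, hm]

lemma sg_add (n : ℕ) (h k : H) : sg p n (h + k) = sg p n h + sg p n k := by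
  simp [sg]

lemma sg_smul (n : ℕ) (c : ℝ) (h : H) : sg p n (c • h) = c • sg p n h := by
  simp [sg]

lemma single_point (hp : 0 < p.toReal) (hp2 : p.toReal ≠ 2)
    (T T' : lp (fun _ : ℕ => H) p →ₗ[ℝ] lp (fun _ : ℕ => H) p)
    (hT' : ∀ f, ‖T' f‖ = ‖f‖) (h1 : ∀ f, T' (T f) = f) (h2 : ∀ f, T (T' f) = f)
    (n : ℕ) (h : H) (m k : ℕ) (hmk : m ≠ k) (hm : T (sg p n h) m ≠ 0) :
    T (sg p n h) k = 0 := by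
  by_contra hk
  set g := T (sg p n h) with hg
  set g1 := sg p m (g m) with hg1
  have hd : ∀ j, g1 j = 0 ∨ (g - g1) j = 0 := fun j => by
    by_cases hj : j = m
    · subst hj; right; simp [hg1]
    · left; exact sg_ne hj _
  have hd' := disj_of_iso hp hp2 T' hT' _ _ hd
  have hsum : T' g1 + T' (g - g1) = sg p n h := by
    rw [← map_add, add_sub_cancel, hg, h1]
  have hpt : ∀ j, T' g1 j + T' (g - g1) j = sg p n h j := fun j => by
    rw [← hsum]; rfl
  have key : T' g1 = 0 ∨ T' (g - g1) = 0 := by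
    rcases hd' n with h0 | h0
    · left; ext j
      by_cases hj : j = n
      · subst hj; simpa using h0
      · have := hpt j
        rw [sg_ne hj] at this
        rcases hd' j with h3 | h3
        · simpa using h3
        · rw [h3, add_zero] at this; simpa using this
    · right; ext j
      by_cases hj : j = n
      · subst hj; simpa using h0
      · have := hpt j
        rw [sg_ne hj] at this
        rcases hd' j with h3 | h3
        · rw [h3, zero_add] at this; simpa using this
        · simpa using h3
  rcases key with h0 | h0
  · have h3 : g1 = 0 := by rw [← h2 g1, h0, map_zero]
    apply hm
    rw [← sg_self (p := p) m (g m), ← hg1, h3]; rfl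
  · have h3 : g - g1 = 0 := by rw [← h2 (g - g1), h0, map_zero]
    apply hk
    rw [sub_eq_zero.1 h3]
    exact sg_ne hmk.symm _

lemma exists_tau [Nontrivial H] (hp : 0 < p.toReal) (hp2 : p.toReal ≠ 2)
    (T T' : lp (fun _ : ℕ => H) p →ₗ[ℝ] lp (fun _ : ℕ => H) p)
    (hT' : ∀ f, ‖T' f‖ = ‖f‖) (h1 : ∀ f, T' (T f) = f) (h2 : ∀ f, T (T' f) = f)
    (n : ℕ) : ∃ t : ℕ, ∀ h : H, ∀ k, k ≠ t → T (sg p n h) k = 0 := by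
  have sp := single_point hp hp2 T T' hT' h1 h2 n
  obtain ⟨h0, hh0⟩ := exists_ne (0 : H)
  have hne : ∃ t, T (sg p n h0) t ≠ 0 := by
    by_contra! hc
    have h3 : T (sg p n h0) = 0 := by ext j; simpa using hc j
    apply hh0
    rw [← sg_self (p := p) n h0, ← h1 (sg p n h0), h3, map_zero]; rfl
  obtain ⟨t, ht⟩ := hne
  refine ⟨t, fun h k hk => ?_⟩
  by_contra hc
  have ha : T (sg p n h) t = 0 := sp h k t hk hc
  have hb : T (sg p n h0) k = 0 := sp h0 t k hk.symm ht
  have hadd : ∀ j, T (sg p n (h + h0)) j = T (sg p n h) j + T (sg p n h0) j := fun j => by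
    rw [sg_add, map_add]; rfl
  have := sp (h + h0) k t hk (by rw [hadd, hb, add_zero]; exact hc)
  rw [hadd, ha, zero_add] at this
  exact ht this

end

end LpIso

open LpIso

/-- Surjective isometries of `ℓ^p(ℕ; H)`, `1 ≤ p < ∞`, `p ≠ 2`, `H` a separable real
Hilbert space of dimension at least 2, have canonical vector form. -/
theorem lp_hilbert_valued_isometries_canonical_form
    (p : ℝ≥0∞) [Fact (1 ≤ p)] (hp1 : 1 ≤ p) (hptop : p ≠ ∞) (hp2 : p ≠ 2)
    {H : Type*} [NormedAddCommGroup H] [InnerProductSpace ℝ H] [CompleteSpace H]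
    [TopologicalSpace.SeparableSpace H] (hdim : 2 ≤ Module.rank ℝ H)
    (T : lp (fun _ : ℕ => H) p →ₗ[ℝ] lp (fun _ : ℕ => H) p)
    (hTsurj : Function.Surjective T)
    (hTiso : ∀ f, ‖T f‖ = ‖f‖) :
    ∃ (σ : Equiv.Perm ℕ) (a : ℕ → ℝ) (S : ℕ → (H →ₗ[ℝ] H)),
      (∀ n, |a n| = 1) ∧
      (∀ n, Function.Surjective (S n)) ∧
      (∀ n (h : H), ‖S n h‖ = ‖h‖) ∧
      ∀ (f : lp (fun _ : ℕ => H) p) (n : ℕ),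
        (T f : ∀ _ : ℕ, H) n = a n • S n ((f : ∀ _ : ℕ, H) (σ n)) := by
  have hp : 0 < p.toReal := ENNReal.toReal_pos (by rintro rfl; simp at hp1) hptop
  have hp2' : p.toReal ≠ 2 := fun h => hp2 (by
    rw [← ENNReal.ofReal_toReal hptop, h]; simp)
  have : Nontrivial H := by
    rw [← rank_pos_iff_nontrivial (R := ℝ)]
    exact lt_of_lt_of_le (by norm_num) hdim
  have hinj : Function.Injective T := by
    rw [injective_iff_map_eq_zero]
    intro f hf
    rw [← norm_eq_zero, ← hTiso, hf, norm_zero]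
  let e := LinearEquiv.ofBijective T ⟨hinj, hTsurj⟩
  let T' : lp (fun _ : ℕ => H) p →ₗ[ℝ] lp (fun _ : ℕ => H) p := e.symm.toLinearMap
  have h1 : ∀ f, T' (T f) = f := fun f => e.symm_apply_apply f
  have h2 : ∀ f, T (T' f) = f := fun f => e.apply_symm_apply f
  have hT' : ∀ f, ‖T' f‖ = ‖f‖ := fun f => by rw [← hTiso, h2]
  clear_value T'
  choose t ht using exists_tau hp hp2' T T' hT' h1 h2
  choose t' ht' using exists_tau hp hp2' T' T hTiso h2 h1
  have e1 : ∀ n h, T (sg p n h) = sg p (t n) (T (sg p n h) (t n)) := fun n h => by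
    ext j
    by_cases hj : j = t n
    · subst hj; rw [sg_self]
    · rw [sg_ne hj, ht n h j hj]
  have e2 : ∀ n h, T' (sg p n h) = sg p (t' n) (T' (sg p n h) (t' n)) := fun n h => by
    ext j
    by_cases hj : j = t' n
    · subst hj; rw [sg_self]
    · rw [sg_ne hj, ht' n h j hj]
  obtain ⟨h0, hh0⟩ := exists_ne (0 : H)
  have i1 : ∀ n, t' (t n) = n := fun n => by
    by_contra hc
    apply hh0
    rw [← sg_self (p := p) n h0, ← h1 (sg p n h0), e1, e2]
    exact sg_ne (Ne.symm hc) _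
  have i2 : ∀ n, t (t' n) = n := fun n => by
    by_contra hc
    apply hh0
    rw [← sg_self (p := p) n h0, ← h2 (sg p n h0), e2, e1]
    exact sg_ne (Ne.symm hc) _
  have nsg : ∀ n (h : H), ‖sg p n h‖ = ‖h‖ := fun n h => by
    have hp0 : 0 < p := lt_of_lt_of_le one_pos hp1
    exact lp.norm_single (E := fun _ : ℕ => H) hp0 n h
  let S : ℕ → (H →ₗ[ℝ] H) := fun n =>
    { toFun := fun h => T (sg p (t' n) h) n
      map_add' := fun x y => by rw [sg_add, map_add]; rfl
      map_smul' := fun c x => by rw [sg_smul, map_smul]; rfl }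
  have hS : ∀ n h, T (sg p (t' n) h) = sg p n (S n h) := fun n h => by
    have := e1 (t' n) h
    rw [i2] at this
    exact this
  have nS : ∀ n h, ‖S n h‖ = ‖h‖ := fun n h => by
    rw [← nsg n (S n h), ← hS, hTiso, nsg]
  refine ⟨⟨t', t, i2, i1⟩, fun _ => 1, S, by simp, ?_, nS, ?_⟩
  · intro n h
    refine ⟨T' (sg p n h) (t' n), ?_⟩
    have h3 := hS n (T' (sg p n h) (t' n))
    rw [← e2, h2] at h3
    rw [← sg_self (p := p) n (S n _), ← h3, sg_self]
  · intro f n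
    change T f n = (1 : ℝ) • S n (f (t' n))
    rw [one_smul]
    set r := f - sg p (t' n) (f (t' n)) with hr
    have hf : f = sg p (t' n) (f (t' n)) + r := by rw [hr]; abel
    have hd : ∀ j, sg p (t' n) h0 j = 0 ∨ r j = 0 := fun j => by
      by_cases hj : j = t' n
      · subst hj; right; simp [hr]
      · left; exact sg_ne hj _
    have hz : T r n = 0 := by
      rcases disj_of_iso hp hp2' T hTiso _ _ hd n with h3 | h3
      · rw [hS, sg_self] at h3
        exact absurd (by rw [← norm_eq_zero, ← nS n, h3, norm_zero]) hh0
      · exact h3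
    have h4 : T f n = T (sg p (t' n) (f (t' n))) n + T r n := by
      conv_lhs => rw [hf, map_add]
      rfl
    rw [h4, hz, add_zero, hS, sg_self]
end

section
/- Let 1 ≤ p < ∞ with p ≠ 2, and let H be a separable real Hilbert space with dim H ≥ 2. Let T be a surjective linear isometry of the Bochner space L^p([0,1]; H) (with respect to Lebesgue measure λ). Then there exist: a measurable function a : [0,1] → ℝ that is nonvanishing almost everywhere; a measurable bijection σ : [0,1] → [0,1] with measurable inverse such that for every Borel set B ⊆ [0,1], λ(σ⁻¹(B)) = 0 if and only if λ(B) = 0; and a map S : [0,1] → B(H) such that t ↦ S(t)h is measurable for every h ∈ H and S(t) is a surjective linear isometry of H for almost every t; such that for every f ∈ L^p([0,1]; H) (with any choice of measurable representative, the composition being well defined up to null sets since σ⁻¹ preserves null sets), (T f)(t) = a(t) • S(t)(f(σ(t))) for almost every t ∈ [0,1]. -/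
open MeasureTheory
open scoped ENNReal

set_option linter.unusedSectionVars false


namespace LpCan

theorem rpow_add_strict_gt {a b s : ℝ} (ha : 0 < a) (hb : 0 < b) (hs : 1 < s) :
    a ^ s + b ^ s < (a + b) ^ s := by
  have hab : 0 < a + b := by positivity
  have h1 : (a / (a+b)) ^ s < a / (a+b) := by
    have := Real.rpow_lt_rpow_of_exponent_gt (x := a/(a+b)) (by positivity)
      (by rw [div_lt_one hab]; linarith) hs
    simpa using this
  have h2 : (b / (a+b)) ^ s < b / (a+b) := by
    have := Real.rpow_lt_rpow_of_exponent_gt (x := b/(a+b)) (by positivity)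
      (by rw [div_lt_one hab]; linarith) hs
    simpa using this
  rw [Real.div_rpow ha.le hab.le] at h1
  rw [Real.div_rpow hb.le hab.le] at h2
  have h3 : a / (a+b) + b / (a+b) = 1 := by field_simp
  have h4 : 0 < (a+b)^s := by positivity
  have h5 : (a^s + b^s) / (a+b)^s < 1 := by rw [add_div]; linarith
  rwa [div_lt_one h4] at h5

theorem rpow_add_strict_lt {a b s : ℝ} (ha : 0 < a) (hb : 0 < b) (hs : s < 1) :
    (a + b) ^ s < a ^ s + b ^ s := by
  have hab : 0 < a + b := by positivity
  have h1 : a / (a+b) < (a / (a+b)) ^ s := by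
    have := Real.rpow_lt_rpow_of_exponent_gt (x := a/(a+b)) (by positivity)
      (by rw [div_lt_one hab]; linarith) hs
    simpa using this
  have h2 : b / (a+b) < (b / (a+b)) ^ s := by
    have := Real.rpow_lt_rpow_of_exponent_gt (x := b/(a+b)) (by positivity)
      (by rw [div_lt_one hab]; linarith) hs
    simpa using this
  rw [Real.div_rpow ha.le hab.le] at h1
  rw [Real.div_rpow hb.le hab.le] at h2
  have h3 : a / (a+b) + b / (a+b) = 1 := by field_simp
  have h4 : 0 < (a+b)^s := by positivity
  have h5 : 1 < (a^s + b^s) / (a+b)^s := by rw [add_div]; linarith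
  rwa [one_lt_div h4] at h5

section pointwise
variable {H : Type*} [NormedAddCommGroup H] [InnerProductSpace ℝ H]

/-- The Clarkson defect. -/
noncomputable def clD (q : ℝ) (x y : H) : ℝ :=
  ‖x + y‖ ^ q + ‖x - y‖ ^ q - 2 * ‖x‖ ^ q - 2 * ‖y‖ ^ q

theorem sq_rpow_half (q : ℝ) (x : H) : ‖x‖ ^ q = (‖x‖^2) ^ (q/2) := by
  rw [← Real.rpow_natCast, ← Real.rpow_mul (norm_nonneg _)]; congr 1; push_cast; ring

theorem clD_zero {q : ℝ} (hq : 0 < q) (x y : H) (h : x = 0 ∨ y = 0) : clD q x y = 0 := by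
  rcases h with rfl | rfl <;> simp [clD, Real.zero_rpow hq.ne'] <;> ring

theorem clD_pos {q : ℝ} (hq : 2 < q) (x y : H) (hx : x ≠ 0) (hy : y ≠ 0) : 0 < clD q x y := by
  have hpar := parallelogram_law_with_norm ℝ x y
  unfold clD
  simp only [sq_rpow_half q]
  have hx' : 0 < ‖x‖^2 := by positivity
  have hy' : 0 < ‖y‖^2 := by positivity
  have h1 := rpow_add_strict_gt hx' hy' (s := q/2) (by linarith)
  have h2 := (convexOn_rpow (p := q/2) (by linarith)).2 (show ‖x+y‖^2 ∈ Set.Ici (0:ℝ) from pow_nonneg (norm_nonneg _) 2)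
    (show ‖x-y‖^2 ∈ Set.Ici (0:ℝ) from pow_nonneg (norm_nonneg _) 2)
    (show (0:ℝ) ≤ 1/2 by norm_num) (show (0:ℝ) ≤ 1/2 by norm_num) (by norm_num)
  simp only [smul_eq_mul] at h2
  have h3 : 1/2 * ‖x+y‖^2 + 1/2 * ‖x-y‖^2 = ‖x‖^2 + ‖y‖^2 := by linarith
  rw [h3] at h2
  linarith

theorem clD_neg {q : ℝ} (hq0 : 0 < q) (hq : q < 2) (x y : H) (hx : x ≠ 0) (hy : y ≠ 0) :
    clD q x y < 0 := by
  have hpar := parallelogram_law_with_norm ℝ x y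
  unfold clD
  simp only [sq_rpow_half q]
  have hx' : 0 < ‖x‖^2 := by positivity
  have hy' : 0 < ‖y‖^2 := by positivity
  have h1 := rpow_add_strict_lt hx' hy' (s := q/2) (by linarith)
  have h2 := (Real.concaveOn_rpow (p := q/2) (by linarith) (by linarith)).2
    (show ‖x+y‖^2 ∈ Set.Ici (0:ℝ) from pow_nonneg (norm_nonneg _) 2)
    (show ‖x-y‖^2 ∈ Set.Ici (0:ℝ) from pow_nonneg (norm_nonneg _) 2)
    (show (0:ℝ) ≤ 1/2 by norm_num) (show (0:ℝ) ≤ 1/2 by norm_num) (by norm_num)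
  simp only [smul_eq_mul] at h2
  have h3 : 1/2 * ‖x+y‖^2 + 1/2 * ‖x-y‖^2 = ‖x‖^2 + ‖y‖^2 := by linarith
  rw [h3] at h2
  linarith

theorem clD_eq_zero_iff {q : ℝ} (hq0 : 0 < q) (hq : q ≠ 2) (x y : H) :
    clD q x y = 0 ↔ (x = 0 ∨ y = 0) := by
  refine ⟨fun h => ?_, clD_zero hq0 x y⟩
  by_contra! hc
  rcases lt_or_gt_of_ne hq with h2 | h2
  · exact (clD_neg hq0 h2 x y hc.1 hc.2).ne h
  · exact (clD_pos h2 x y hc.1 hc.2).ne' h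

end pointwise

section disjoint
variable {X : Type*} [MeasurableSpace X] {μ : Measure X} {p : ℝ≥0∞}
  {H : Type*} [NormedAddCommGroup H] [InnerProductSpace ℝ H]

theorem Lp_norm_rpow (hp0 : p ≠ 0) (hptop : p ≠ ∞) (f : Lp H p μ) :
    ‖f‖ ^ p.toReal = ∫ t, ‖f t‖ ^ p.toReal ∂μ := by
  have hq := ENNReal.toReal_pos hp0 hptop
  have hnn : 0 ≤ ∫ t, ‖f t‖ ^ p.toReal ∂μ := integral_nonneg fun t => by positivity
  rw [Lp.norm_def, (Lp.memLp f).eLpNorm_eq_integral_rpow_norm hp0 hptop,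
    ENNReal.toReal_ofReal (by positivity), ← Real.rpow_mul hnn, inv_mul_cancel₀ hq.ne',
    Real.rpow_one]

theorem Lp_integrable_rpow (hp0 : p ≠ 0) (hptop : p ≠ ∞) (f : Lp H p μ) :
    Integrable (fun t => ‖f t‖ ^ p.toReal) μ :=
  (Lp.memLp f).integrable_norm_rpow hp0 hptop

theorem ae_disjoint_iff (hp0 : p ≠ 0) (hptop : p ≠ ∞) (hp2 : p ≠ 2) (f g : Lp H p μ) :
    (∀ᵐ t ∂μ, f t = 0 ∨ g t = 0) ↔
      ‖f + g‖ ^ p.toReal + ‖f - g‖ ^ p.toReal - 2 * ‖f‖ ^ p.toReal - 2 * ‖g‖ ^ p.toReal = 0 := by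
  have hq := ENNReal.toReal_pos hp0 hptop
  have hq2 : p.toReal ≠ 2 := fun h => hp2 (by
    rw [← ENNReal.ofReal_toReal hptop, h]; simp)
  have key : ‖f + g‖ ^ p.toReal + ‖f - g‖ ^ p.toReal - 2 * ‖f‖ ^ p.toReal - 2 * ‖g‖ ^ p.toReal
      = ∫ t, clD p.toReal (f t) (g t) ∂μ := by
    have e1 : ∫ t, clD p.toReal (f t) (g t) ∂μ = ∫ t, (‖(f + g) t‖ ^ p.toReal
        + ‖(f - g) t‖ ^ p.toReal - 2 * ‖f t‖ ^ p.toReal - 2 * ‖g t‖ ^ p.toReal) ∂μ := by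
      apply integral_congr_ae
      filter_upwards [Lp.coeFn_add f g, Lp.coeFn_sub f g] with t h1 h2
      rw [h1, h2]; rfl
    have i1 := Lp_integrable_rpow hp0 hptop (f + g)
    have i2 := Lp_integrable_rpow hp0 hptop (f - g)
    have i3 := (Lp_integrable_rpow hp0 hptop f).const_mul 2
    have i4 := (Lp_integrable_rpow hp0 hptop g).const_mul 2
    have j1 := integral_sub ((i1.add i2).sub i3) i4
    have j2 := integral_sub (i1.add i2) i3
    have j3 := integral_add i1 i2
    simp only [Pi.add_apply, Pi.sub_apply] at j1 j2 j3
    rw [e1, j1, j2, j3, integral_const_mul, integral_const_mul]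
    simp only [Lp_norm_rpow hp0 hptop]
  have hint : Integrable (fun t => clD p.toReal (f t) (g t)) μ := by
    have i1 := Lp_integrable_rpow hp0 hptop (f + g)
    have i2 := Lp_integrable_rpow hp0 hptop (f - g)
    have i3 := (Lp_integrable_rpow hp0 hptop f).const_mul 2
    have i4 := (Lp_integrable_rpow hp0 hptop g).const_mul 2
    refine (((i1.add i2).sub i3).sub i4).congr ?_
    filter_upwards [Lp.coeFn_add f g, Lp.coeFn_sub f g] with t h1 h2
    simp only [Pi.sub_apply, Pi.add_apply, clD, h1, h2]
  rw [key]
  have hz : (∀ᵐ t ∂μ, f t = 0 ∨ g t = 0) ↔ (fun t => clD p.toReal (f t) (g t)) =ᵐ[μ] 0 := by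
    refine Filter.eventually_congr (Filter.Eventually.of_forall fun t => ?_)
    simp [clD_eq_zero_iff hq hq2]
  rw [hz]
  rcases lt_or_gt_of_ne hq2 with h2 | h2
  · rw [← neg_eq_zero, ← integral_neg]
    have hint' : Integrable (fun t => - clD p.toReal (f t) (g t)) μ := hint.neg
    rw [integral_eq_zero_iff_of_nonneg_ae (Filter.Eventually.of_forall fun t => ?_) hint']
    · refine Filter.eventually_congr (Filter.Eventually.of_forall fun t => ?_)
      simp
    · by_cases hc : f t = 0 ∨ g t = 0
      · simp [clD_zero hq _ _ hc]
      · push Not at hc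
        simpa using (clD_neg hq h2 _ _ hc.1 hc.2).le
  · rw [integral_eq_zero_iff_of_nonneg_ae (Filter.Eventually.of_forall fun t => ?_) hint]
    by_cases hc : f t = 0 ∨ g t = 0
    · simp [clD_zero hq _ _ hc]
    · push Not at hc
      simpa using (clD_pos h2 _ _ hc.1 hc.2).le

theorem disjoint_map [Fact (1 ≤ p)] (hptop : p ≠ ∞) (hp2 : p ≠ 2) (T : Lp H p μ ≃ₗᵢ[ℝ] Lp H p μ)
    (f g : Lp H p μ) : (∀ᵐ t ∂μ, T f t = 0 ∨ T g t = 0) ↔ (∀ᵐ t ∂μ, f t = 0 ∨ g t = 0) := by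
  have hp0 : p ≠ 0 := (zero_lt_one.trans_le (Fact.out : 1 ≤ p)).ne'
  rw [ae_disjoint_iff hp0 hptop hp2, ae_disjoint_iff hp0 hptop hp2, ← map_add, ← map_sub]
  simp only [LinearIsometryEquiv.norm_map]

end disjoint

end LpCan


namespace LpCan
section bands
variable {X : Type*} [MeasurableSpace X] {μ : Measure X} [IsFiniteMeasure μ] {p : ℝ≥0∞}
  [Fact (1 ≤ p)]
  {H : Type*} [NormedAddCommGroup H] [InnerProductSpace ℝ H]

/-- Multiplication by the indicator function of a measurable set. -/
noncomputable def ind (B : Set X) (hB : MeasurableSet B) (f : Lp H p μ) : Lp H p μ :=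
  ((Lp.memLp f).indicator hB).toLp _

theorem ind_coe (B : Set X) (hB : MeasurableSet B) (f : Lp H p μ) :
    ind B hB f =ᵐ[μ] B.indicator f := MemLp.coeFn_toLp _

theorem const_coe (h : H) : ∀ᵐ t ∂μ, (Lp.const p μ h) t = h := by
  filter_upwards [Lp.coeFn_const p μ h] with t ht using ht

/-- `f` vanishes a.e. on `B`. -/
def VanOn (f : Lp H p μ) (B : Set X) : Prop := ∀ᵐ t ∂μ, t ∈ B → f t = 0

/-- The set `E` corresponds to `B` under `T`. -/
def Corr (T : Lp H p μ ≃ₗᵢ[ℝ] Lp H p μ) (B E : Set X) : Prop :=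
  ∀ f : Lp H p μ, VanOn f B ↔ VanOn (T f) E

theorem Corr.symm {T : Lp H p μ ≃ₗᵢ[ℝ] Lp H p μ} {B E : Set X} (h : Corr T B E) :
    Corr T.symm E B := fun f => by simpa using (h (T.symm f)).symm

theorem vanOn_compl_iff {e : H} (he : e ≠ 0) {B : Set X} (hB : MeasurableSet B) (f : Lp H p μ) :
    VanOn f Bᶜ ↔ ∀ g : Lp H p μ, VanOn g B → ∀ᵐ t ∂μ, f t = 0 ∨ g t = 0 := by
  constructor
  · intro hf g hg
    filter_upwards [hf, hg] with t h1 h2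
    by_cases ht : t ∈ B
    · exact Or.inr (h2 ht)
    · exact Or.inl (h1 ht)
  · intro h
    have h1 : VanOn (ind Bᶜ hB.compl (Lp.const p μ e)) B := by
      filter_upwards [ind_coe Bᶜ hB.compl (Lp.const p μ e)] with t ht htB
      simp [ht, htB]
    filter_upwards [h _ h1, ind_coe Bᶜ hB.compl (Lp.const p μ e), const_coe (p := p) (μ := μ) e]
      with t h2 h3 h4 ht
    rcases h2 with h2 | h2
    · exact h2
    · rw [h3, Set.indicator_of_mem ht, h4] at h2
      exact absurd h2 he

theorem Corr.compl (hptop : p ≠ ∞) (hp2 : p ≠ 2) {e : H} (he : e ≠ 0)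
    {T : Lp H p μ ≃ₗᵢ[ℝ] Lp H p μ} {B E : Set X}
    (hB : MeasurableSet B) (hE : MeasurableSet E) (h : Corr T B E) : Corr T Bᶜ Eᶜ := by
  intro f
  rw [vanOn_compl_iff he hB, vanOn_compl_iff he hE]
  constructor
  · intro hf g hg
    have := hf (T.symm g) ((h _).2 (by simpa using hg))
    rw [← disjoint_map hptop hp2 T] at this
    simpa using this
  · intro hf g hg
    rw [← disjoint_map hptop hp2 T]
    exact hf _ ((h _).1 hg)

theorem Corr.iUnion {ι : Type*} [Countable ι] {T : Lp H p μ ≃ₗᵢ[ℝ] Lp H p μ} {B E : ι → Set X}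
    (h : ∀ i, Corr T (B i) (E i)) : Corr T (⋃ i, B i) (⋃ i, E i) := by
  have key : ∀ (f : Lp H p μ) (B : ι → Set X), VanOn f (⋃ i, B i) ↔ ∀ i, VanOn f (B i) := by
    intro f B
    unfold VanOn
    rw [← ae_all_iff]
    refine Filter.eventually_congr (Filter.Eventually.of_forall fun t => ?_)
    simp
  intro f
  rw [key, key]
  exact forall_congr' fun i => h i f

theorem Corr.empty {T : Lp H p μ ≃ₗᵢ[ℝ] Lp H p μ} : Corr T ∅ ∅ := by
  intro f
  simp [VanOn]

theorem exists_corr (hptop : p ≠ ∞) (hp2 : p ≠ 2) {e : H} (he : e ≠ 0)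
    (T : Lp H p μ ≃ₗᵢ[ℝ] Lp H p μ) {B : Set X}
    (hB : MeasurableSet B) : ∃ E, MeasurableSet E ∧ Corr T B E := by
  set v := T (ind B hB (Lp.const p μ e)) with hv
  refine ⟨{t | v t = 0}ᶜ, ?_, ?_⟩
  · exact (StronglyMeasurable.measurableSet_eq_fun (Lp.stronglyMeasurable v)
      stronglyMeasurable_const).compl
  · intro f
    have h1 : VanOn f B ↔ ∀ᵐ t ∂μ, f t = 0 ∨ (ind B hB (Lp.const p μ e)) t = 0 := by
      refine Filter.eventually_congr ?_
      filter_upwards [ind_coe B hB (Lp.const p μ e), const_coe (p := p) (μ := μ) e] with t h1 h2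
      rw [h1]
      by_cases ht : t ∈ B
      · rw [Set.indicator_of_mem ht, h2]; simp [ht, he]
      · simp [ht]
    rw [h1, ← disjoint_map hptop hp2 T]
    refine Filter.eventually_congr (Filter.Eventually.of_forall fun t => ?_)
    simp only [Set.mem_compl_iff, Set.mem_ofPred_eq, hv]
    tauto

theorem Corr.ae_le_left {e : H} (he : e ≠ 0) {T : Lp H p μ ≃ₗᵢ[ℝ] Lp H p μ} {B B' E : Set X}
    (hB' : MeasurableSet B') (h : Corr T B E) (h' : Corr T B' E) :
    ∀ᵐ t ∂μ, t ∈ B → t ∈ B' := by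
  have h1 : VanOn (ind B'ᶜ hB'.compl (Lp.const p μ e)) B' := by
    filter_upwards [ind_coe B'ᶜ hB'.compl (Lp.const p μ e)] with t ht htB
    simp [ht, htB]
  have h2 := (h _).2 ((h' _).1 h1)
  filter_upwards [h2, ind_coe B'ᶜ hB'.compl (Lp.const p μ e), const_coe (p := p) (μ := μ) e]
    with t h2 h3 h4 ht
  by_contra hc
  have := h2 ht
  rw [h3, Set.indicator_of_mem hc, h4] at this
  exact he this

theorem Corr.null_iff {e : H} (he : e ≠ 0) {T : Lp H p μ ≃ₗᵢ[ℝ] Lp H p μ} {B E : Set X}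
    (h : Corr T B E) : μ E = 0 ↔ μ B = 0 := by
  have key : ∀ B : Set X, μ B = 0 ↔ ∀ f : Lp H p μ, VanOn f B := by
    intro B
    rw [measure_eq_zero_iff_ae_notMem]
    constructor
    · intro hB f
      filter_upwards [hB] with t ht ht' using absurd ht' ht
    · intro hB
      filter_upwards [hB (Lp.const p μ e), const_coe (p := p) (μ := μ) e] with t h1 h2 ht
      exact he (h2.symm.trans (h1 ht))
  rw [key, key]
  constructor
  · intro hE f
    exact (h f).2 (hE _)
  · intro hB f
    simpa using (h (T.symm f)).1 (hB _)

theorem Corr.map_ind (hptop : p ≠ ∞) (hp2 : p ≠ 2) {e : H} (he : e ≠ 0)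
    {T : Lp H p μ ≃ₗᵢ[ℝ] Lp H p μ} {B E : Set X}
    (hB : MeasurableSet B) (hE : MeasurableSet E) (h : Corr T B E) (f : Lp H p μ) :
    T (ind B hB f) = ind E hE (T f) := by
  have h1 : VanOn (ind B hB f) Bᶜ := by
    filter_upwards [ind_coe B hB f] with t ht htB
    simpa [ht] using fun h => absurd h htB
  have h2 : VanOn (f - ind B hB f) B := by
    filter_upwards [ind_coe B hB f, Lp.coeFn_sub f (ind B hB f)] with t ht h htB
    rw [h, Pi.sub_apply, ht, Set.indicator_of_mem htB, sub_self]
  have h3 := (h.compl hptop hp2 he hB hE _).1 h1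
  have h4 := (h _).1 h2
  rw [map_sub] at h4
  apply Lp.ext
  filter_upwards [h3, h4, Lp.coeFn_sub (T f) (T (ind B hB f)), ind_coe E hE (T f)]
    with t a1 a2 a3 a4
  rw [a4]
  by_cases ht : t ∈ E
  · have := a2 ht
    rw [a3, Pi.sub_apply, sub_eq_zero] at this
    rw [Set.indicator_of_mem ht, this]
  · rw [a1 ht, Set.indicator_of_notMem ht]

end bands

section realization
variable {p : ℝ≥0∞} [Fact (1 ≤ p)]
  {H : Type*} [NormedAddCommGroup H] [InnerProductSpace ℝ H]

/-- The unit interval as a type. -/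
abbrev II := Set.Icc (0:ℝ) 1

theorem exists_point_map (hptop : p ≠ ∞) (hp2 : p ≠ 2) {e : H} (he : e ≠ 0)
    (T : Lp H p (volume : Measure II) ≃ₗᵢ[ℝ] Lp H p (volume : Measure II)) :
    ∃ σ : II → II, Measurable σ ∧ ∀ B, MeasurableSet B → Corr T B (σ ⁻¹' B) := by
  have hBq : ∀ q : ℚ, MeasurableSet {t : II | (t : ℝ) ≤ q} := fun q =>
    measurableSet_le measurable_subtype_coe measurable_const
  choose E hEm hEc using fun q : ℚ => exists_corr hptop hp2 he T (hBq q)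
  let Q : II → Set ℝ := fun t => {x | ∃ q : ℚ, (q : ℝ) = x ∧ 0 ≤ q ∧ (t ∈ E q ∨ 1 ≤ q)}
  have hbdd : ∀ t, BddBelow (Q t) := fun t => ⟨0, by
    rintro x ⟨q, rfl, hq, -⟩; exact_mod_cast hq⟩
  have h1 : ∀ t, (1:ℝ) ∈ Q t := fun t => ⟨1, by simp, by simp, Or.inr le_rfl⟩
  let σ : II → II := fun t => ⟨sInf (Q t), le_csInf ⟨1, h1 t⟩ (by
    rintro x ⟨q, rfl, hq, -⟩; exact_mod_cast hq), csInf_le (hbdd t) (h1 t)⟩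
  have hpre : ∀ r : II, σ ⁻¹' (Set.Iio r) = ⋃ q : {q : ℚ // 0 ≤ q ∧ (q : ℝ) < r}, E q := by
    intro r
    ext t
    simp only [Set.mem_preimage, Set.mem_Iio, Set.mem_iUnion, ← Subtype.coe_lt_coe, σ]
    rw [csInf_lt_iff (hbdd t) ⟨1, h1 t⟩]
    constructor
    · rintro ⟨x, ⟨q, rfl, hq, h⟩, hlt⟩
      refine ⟨⟨q, hq, hlt⟩, ?_⟩
      rcases h with h | h
      · exact h
      · exfalso
        have h' : (1:ℝ) ≤ q := by exact_mod_cast h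
        have := r.2.2
        linarith
    · rintro ⟨⟨q, hq, hlt⟩, h⟩
      exact ⟨q, ⟨q, rfl, hq, Or.inl h⟩, hlt⟩
  have hIio : ∀ r : II, Set.Iio r =
      ⋃ q : {q : ℚ // 0 ≤ q ∧ (q : ℝ) < r}, {t : II | (t : ℝ) ≤ (q : ℚ)} := by
    intro r
    ext t
    simp only [Set.mem_Iio, Set.mem_iUnion, ← Subtype.coe_lt_coe, Set.mem_ofPred_eq]
    constructor
    · intro h
      obtain ⟨q, h2, h3⟩ := exists_rat_btwn h
      refine ⟨⟨q, ?_, h3⟩, h2.le⟩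
      have : (0:ℝ) ≤ q := t.2.1.trans h2.le
      exact_mod_cast this
    · rintro ⟨⟨q, hq, hlt⟩, h⟩
      exact lt_of_le_of_lt h hlt
  have hσ : Measurable σ := by
    apply measurable_of_Iio
    intro r
    rw [hpre]
    exact MeasurableSet.iUnion fun q => hEm q
  refine ⟨σ, hσ, fun B hB => ?_⟩
  have hgen : (inferInstance : MeasurableSpace II)
      = MeasurableSpace.generateFrom (Set.range Set.Iio) := by
    rw [← borel_eq_generateFrom_Iio]; exact BorelSpace.measurable_eq
  have hB' : MeasurableSet[MeasurableSpace.generateFrom (Set.range Set.Iio)] B := by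
    rw [← hgen]; exact hB
  suffices MeasurableSet B ∧ Corr T B (σ ⁻¹' B) from this.2
  refine MeasurableSpace.generateFrom_induction (Set.range Set.Iio)
    (fun B _ => MeasurableSet B ∧ Corr T B (σ ⁻¹' B)) ?_ ?_ ?_ ?_ B hB'
  · rintro _ ⟨r, rfl⟩ -
    refine ⟨measurableSet_Iio, ?_⟩
    rw [hpre, hIio]
    exact Corr.iUnion fun q => hEc q
  · exact ⟨MeasurableSet.empty, Corr.empty⟩
  · rintro B - ⟨h1, h2⟩
    exact ⟨h1.compl, h2.compl hptop hp2 he h1 (hσ h1)⟩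
  · intro B _ h
    refine ⟨MeasurableSet.iUnion fun i => (h i).1, ?_⟩
    rw [Set.preimage_iUnion]
    exact Corr.iUnion fun i => (h i).2

theorem ae_inverse {e : H} (he : e ≠ 0)
    (T : Lp H p (volume : Measure II) ≃ₗᵢ[ℝ] Lp H p (volume : Measure II))
    {σ τ : II → II} (hσ : Measurable σ) (hτ : Measurable τ)
    (h : ∀ B, MeasurableSet B → Corr T B (σ ⁻¹' B))
    (h' : ∀ B, MeasurableSet B → Corr T.symm B (τ ⁻¹' B)) :
    ∀ᵐ t, σ (τ t) = t := by
  have key : ∀ B : Set II, MeasurableSet B → ∀ᵐ t, (t ∈ B ↔ σ (τ t) ∈ B) := by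
    intro B hB
    have c1 := h B hB
    have c2 : Corr T (τ ⁻¹' (σ ⁻¹' B)) (σ ⁻¹' B) := by simpa using (h' _ (hσ hB)).symm
    filter_upwards [c1.ae_le_left he (hτ (hσ hB)) c2, c2.ae_le_left he hB c1] with t h1 h2
    exact ⟨h1, h2⟩
  have hm : ∀ q : ℚ, MeasurableSet {t : II | (t : ℝ) < q} := fun q =>
    measurableSet_lt measurable_subtype_coe measurable_const
  have := ae_all_iff.2 fun q : ℚ => key _ (hm q)
  filter_upwards [this] with t ht
  replace ht : ∀ q : ℚ, ((t : ℝ) < q ↔ ((σ (τ t) : II) : ℝ) < q) := ht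
  apply Subtype.ext
  rcases lt_trichotomy ((σ (τ t) : II) : ℝ) (t : ℝ) with h | h | h
  · obtain ⟨q, h2, h3⟩ := exists_rat_btwn h
    exact absurd ((ht q).2 h2) (not_lt.2 h3.le)
  · exact h
  · obtain ⟨q, h2, h3⟩ := exists_rat_btwn h
    exact absurd ((ht q).1 h2) (not_lt.2 h3.le)

end realization
end LpCan


namespace LpCan

theorem exists_null_uncountable :
    ∃ C : Set II, MeasurableSet C ∧ volume C = 0 ∧ ¬ C.Countable := by
  refine ⟨(Subtype.val : II → ℝ) ⁻¹' {x | Liouville x},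
    measurable_subtype_coe IsGδ.setOfPred_liouville.measurableSet, ?_, ?_⟩
  · rw [← volume_image_subtype_coe measurableSet_Icc]
    exact measure_mono_null (Set.image_preimage_subset _ _) volume_setOfPred_liouville
  · intro hc
    have h1 := hc.image (Subtype.val : II → ℝ)
    have h2 := h1.isGδ_compl
    have h3 := h1.dense_compl ℝ
    have h4 := Dense.inter_of_Gδ IsGδ.setOfPred_liouville h2 dense_liouville h3
    obtain ⟨x, hx1, hx2⟩ := h4.inter_open_nonempty (Set.Ioo (0:ℝ) 1) isOpen_Ioo ⟨1/2, by norm_num⟩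
    exact hx2.2 ⟨⟨x, hx1.1.le, hx1.2.le⟩, hx2.1, rfl⟩

theorem exists_equiv {σ τ : II → II} (hσ : Measurable σ) (hτ : Measurable τ)
    (hnull : ∀ B : Set II, MeasurableSet B → volume B = 0 → volume (σ ⁻¹' B) = 0)
    (h2 : ∀ᵐ t, τ (σ t) = t) :
    ∃ ρ : II ≃ᵐ II, ∀ᵐ t, ρ t = σ t := by
  classical
  obtain ⟨C, hCm, hC0, hCu⟩ := exists_null_uncountable
  let X1 : Set II := {t | τ (σ t) = t} ∩ (Cᶜ ∩ σ ⁻¹' Cᶜ)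
  let Y1 : Set II := {s | σ (τ s) = s} ∩ (Cᶜ ∩ τ ⁻¹' Cᶜ)
  have hX : MeasurableSet X1 :=
    (measurableSet_eq_fun (hτ.comp hσ) measurable_id).inter (hCm.compl.inter (hσ hCm.compl))
  have hY : MeasurableSet Y1 :=
    (measurableSet_eq_fun (hσ.comp hτ) measurable_id).inter (hCm.compl.inter (hτ hCm.compl))
  have mX : ∀ t : X1, σ t ∈ Y1 := by
    rintro ⟨t, ht1, ht2, ht3⟩
    have ht1' : τ (σ t) = t := ht1
    refine ⟨?_, ht3, ?_⟩
    · change σ (τ (σ t)) = σ t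
      rw [ht1']
    · change τ (σ t) ∉ C
      rwa [ht1']
  have mY : ∀ t : Y1, τ t ∈ X1 := by
    rintro ⟨t, ht1, ht2, ht3⟩
    have ht1' : σ (τ t) = t := ht1
    refine ⟨?_, ht3, ?_⟩
    · change τ (σ (τ t)) = τ t
      rw [ht1']
    · change σ (τ t) ∉ C
      rwa [ht1']
  let e1 : X1 ≃ᵐ Y1 :=
    { toFun := fun t => ⟨σ t, mX t⟩
      invFun := fun t => ⟨τ t, mY t⟩
      left_inv := fun t => Subtype.ext t.2.1
      right_inv := fun t => Subtype.ext t.2.1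
      measurable_toFun := (hσ.comp measurable_subtype_coe).subtype_mk
      measurable_invFun := (hτ.comp measurable_subtype_coe).subtype_mk }
  have uX : ¬ Countable (X1ᶜ : Set II) := by
    intro h
    refine hCu ((Set.countable_coe_iff.1 h).mono ?_)
    intro t ht hx
    exact hx.2.1 ht
  have uY : ¬ Countable (Y1ᶜ : Set II) := by
    intro h
    refine hCu ((Set.countable_coe_iff.1 h).mono ?_)
    intro t ht hx
    exact hx.2.1 ht
  have : StandardBorelSpace (X1ᶜ : Set II) := hX.compl.standardBorel
  have : StandardBorelSpace (Y1ᶜ : Set II) := hY.compl.standardBorel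
  let e2 : (X1ᶜ : Set II) ≃ᵐ (Y1ᶜ : Set II) := PolishSpace.measurableEquivOfNotCountable uX uY
  let ρ : II ≃ᵐ II := ((MeasurableEquiv.sumCompl hX).symm.trans (e1.sumCongr e2)).trans
    (MeasurableEquiv.sumCompl hY)
  refine ⟨ρ, ?_⟩
  have a1 : ∀ᵐ t, t ∉ C := measure_eq_zero_iff_ae_notMem.1 hC0
  have a2 : ∀ᵐ t, t ∉ σ ⁻¹' C := measure_eq_zero_iff_ae_notMem.1 (hnull C hCm hC0)
  filter_upwards [a1, a2, h2] with t b1 b2 b3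
  have ht : t ∈ X1 := ⟨b3, b1, b2⟩
  have hs : (MeasurableEquiv.sumCompl hX).symm t = Sum.inl ⟨t, ht⟩ := by
    rw [MeasurableEquiv.symm_apply_eq]; rfl
  change (MeasurableEquiv.sumCompl hY) ((e1.sumCongr e2) ((MeasurableEquiv.sumCompl hX).symm t)) = _
  rw [hs]
  rfl

end LpCan


namespace LpCan

section hilbert
variable {H : Type*} [NormedAddCommGroup H] [InnerProductSpace ℝ H] [CompleteSpace H]

theorem orthonormal_countable [TopologicalSpace.SeparableSpace H] {ι : Type*} {v : ι → H}
    (hv : Orthonormal ℝ v) : Countable ι := by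
  have hd : ∀ i j, i ≠ j → 1 < dist (v i) (v j) := by
    intro i j hij
    have h1 := norm_sub_sq_real (v i) (v j)
    rw [hv.1 i, hv.1 j, hv.2 hij] at h1
    rw [dist_eq_norm]
    nlinarith [norm_nonneg (v i - v j)]
  have hp : Set.univ.PairwiseDisjoint (fun i => Metric.ball (v i) (1/2)) := by
    intro i _ j _ hij
    apply Metric.ball_disjoint_ball
    linarith [hd i j hij]
  have := hp.countable_of_isOpen (fun i _ => Metric.isOpen_ball)
    (fun i _ => ⟨v i, Metric.mem_ball_self (by norm_num)⟩)
  exact Set.countable_univ_iff.1 this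

theorem exists_isometry_of_orthonormal {ι : Type*} (b : HilbertBasis ι ℝ H) {v : ι → H}
    (hv : Orthonormal ℝ v) :
    ∃ L : H →ₗᵢ[ℝ] H, ∀ h, HasSum (fun i => b.repr h i • v i) (L h) := by
  refine ⟨hv.orthogonalFamily.linearIsometry.comp b.repr.toLinearIsometry, fun h => ?_⟩
  simpa using hv.orthogonalFamily.hasSum_linearIsometry (b.repr h)

theorem isometry_apply_basis {ι : Type*} (b : HilbertBasis ι ℝ H) {v : ι → H}
    {L : H →ₗᵢ[ℝ] H} (hL : ∀ h, HasSum (fun i => b.repr h i • v i) (L h)) (i : ι) :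
    L (b i) = v i := by
  classical
  refine (hL (b i)).unique ?_
  have := hasSum_single (f := fun j => b.repr (b i) j • v j) i (fun j hj => by
    simp [b.repr_self, lp.single_apply, hj])
  simpa [b.repr_self] using this

end hilbert

section form
variable {p : ℝ≥0∞} [Fact (1 ≤ p)]
  {H : Type*} [NormedAddCommGroup H] [InnerProductSpace ℝ H] [CompleteSpace H]

theorem norm_ind_rpow (hptop : p ≠ ∞) (A : Set II) (hA : MeasurableSet A)
    (f : Lp H p (volume : Measure II)) :
    ‖ind A hA f‖ ^ p.toReal = ∫ t in A, ‖f t‖ ^ p.toReal := by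
  have hp0 : p ≠ 0 := (zero_lt_one.trans_le (Fact.out : 1 ≤ p)).ne'
  have hq := ENNReal.toReal_pos hp0 hptop
  rw [Lp_norm_rpow hp0 hptop, ← integral_indicator hA]
  apply integral_congr_ae
  filter_upwards [ind_coe A hA f] with t ht
  rw [ht]
  by_cases h : t ∈ A
  · simp [h]
  · simp [h, Real.zero_rpow hq.ne']

theorem norm_const_ae (hptop : p ≠ ∞) (hp2 : p ≠ 2) {e : H} (he : ‖e‖ = 1)
    (T : Lp H p (volume : Measure II) ≃ₗᵢ[ℝ] Lp H p (volume : Measure II))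
    {σ τ : II → II} (hσ : Measurable σ) (hτ : Measurable τ)
    (hc : ∀ B, MeasurableSet B → Corr T B (σ ⁻¹' B))
    (h2 : ∀ᵐ t, τ (σ t) = t) (h : H) :
    ∀ᵐ t, ‖T (Lp.const p volume h) t‖ = ‖h‖ * ‖T (Lp.const p volume e) t‖ := by
  have he0 : e ≠ 0 := by rintro rfl; simp at he
  have hp0 : p ≠ 0 := (zero_lt_one.trans_le (Fact.out : 1 ≤ p)).ne'
  have hq := ENNReal.toReal_pos hp0 hptop
  have key : ∀ (A : Set II), MeasurableSet A → ∀ h : H,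
      ∫ t in A, ‖T (Lp.const p volume h) t‖ ^ p.toReal
        = (volume : Measure II).real (τ ⁻¹' A) * ‖h‖ ^ p.toReal := by
    intro A hA h
    have hB := hτ hA
    have e1 : ind A hA (T (Lp.const p volume h)) = T (ind _ hB (Lp.const p volume h)) := by
      rw [(hc _ hB).map_ind hptop hp2 he0 hB (hσ hB)]
      apply Lp.ext
      filter_upwards [ind_coe A hA (T (Lp.const p volume h)),
        ind_coe _ (hσ hB) (T (Lp.const p volume h)), h2] with t a1 a2 a3
      rw [a1, a2]
      by_cases ht : t ∈ A
      · rw [Set.indicator_of_mem ht, Set.indicator_of_mem]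
        change τ (σ t) ∈ A
        rwa [a3]
      · rw [Set.indicator_of_notMem ht, Set.indicator_of_notMem]
        change τ (σ t) ∉ A
        rwa [a3]
    rw [← norm_ind_rpow hptop A hA, e1, LinearIsometryEquiv.norm_map, norm_ind_rpow hptop]
    have e2 : ∫ t in τ ⁻¹' A, ‖(Lp.const p (volume : Measure II) h) t‖ ^ p.toReal
        = ∫ t in τ ⁻¹' A, ‖h‖ ^ p.toReal := by
      apply integral_congr_ae
      filter_upwards [ae_restrict_of_ae (const_coe (p := p) (μ := (volume : Measure II)) h)]
        with t ht
      simp only [ht]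
    rw [e2, setIntegral_const, smul_eq_mul]
  have i1 := Lp_integrable_rpow hp0 hptop (T (Lp.const p volume h))
  have i2 := (Lp_integrable_rpow hp0 hptop (T (Lp.const p volume e))).const_mul (‖h‖ ^ p.toReal)
  have := i1.ae_eq_of_forall_setIntegral_eq _ _ i2 (fun A hA _ => by
    rw [integral_const_mul, key A hA, key A hA, he, Real.one_rpow]; ring)
  filter_upwards [this] with t ht
  rw [← Real.mul_rpow (norm_nonneg _) (norm_nonneg _)] at ht
  exact (Real.rpow_left_inj (norm_nonneg _) (by positivity) hq.ne').1 ht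

theorem const_ne_zero {e : H} (he : e ≠ 0)
    (T : Lp H p (volume : Measure II) ≃ₗᵢ[ℝ] Lp H p (volume : Measure II))
    {σ τ : II → II} (hτ : Measurable τ)
    (hc : ∀ B, MeasurableSet B → Corr T B (σ ⁻¹' B))
    (h2 : ∀ᵐ t, τ (σ t) = t) : ∀ᵐ t, T (Lp.const p volume e) t ≠ 0 := by
  set u := T (Lp.const p volume e) with hu
  have hE : MeasurableSet {t | u t = 0} :=
    StronglyMeasurable.measurableSet_eq_fun (Lp.stronglyMeasurable u) stronglyMeasurable_const
  have hB := hτ hE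
  have c := hc _ hB
  have v1 : VanOn u (σ ⁻¹' (τ ⁻¹' {t | u t = 0})) := by
    filter_upwards [h2] with t ht hm
    have hm' : u (τ (σ t)) = 0 := hm
    rwa [ht] at hm'
  have v2 := (c _).2 v1
  have n0 : volume (τ ⁻¹' {t | u t = 0}) = 0 := by
    rw [measure_eq_zero_iff_ae_notMem]
    filter_upwards [v2, const_coe (p := p) (μ := (volume : Measure II)) e] with t b1 b2 b3
    exact he (b2.symm.trans (b1 b3))
  have n1 := (c.null_iff he).2 n0
  rw [measure_eq_zero_iff_ae_notMem] at n1
  filter_upwards [n1, h2] with t b1 b2 b3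
  apply b1
  change u (τ (σ t)) = 0
  rwa [b2]

/-- The closed subspace on which the canonical form holds. -/
def goodSub (T : Lp H p (volume : Measure II) ≃ₗᵢ[ℝ] Lp H p (volume : Measure II))
    (σ : II → II) (hσ : Measure.QuasiMeasurePreserving σ volume volume)
    (a : II → ℝ) (S : II → H →L[ℝ] H) : Submodule ℝ (Lp H p (volume : Measure II)) where
  carrier := {f | ∀ᵐ t, T f t = a t • S t (f (σ t))}
  zero_mem' := by
    change ∀ᵐ t, T 0 t = a t • S t ((0 : Lp H p (volume : Measure II)) (σ t))
    rw [map_zero]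
    have h0 := Lp.coeFn_zero H p (volume : Measure II)
    filter_upwards [h0, hσ.ae h0] with t h1 h2
    rw [h1, h2]; simp
  add_mem' := by
    intro f g hf hg
    change ∀ᵐ t, T (f + g) t = a t • S t ((f + g) (σ t))
    rw [map_add]
    filter_upwards [Lp.coeFn_add (T f) (T g), hσ.ae (Lp.coeFn_add f g), hf, hg] with t h1 h2 h3 h4
    rw [h1, h2, Pi.add_apply, Pi.add_apply, map_add, smul_add, h3, h4]
  smul_mem' := by
    intro c f hf
    change ∀ᵐ t, T (c • f) t = a t • S t ((c • f) (σ t))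
    rw [map_smul]
    filter_upwards [Lp.coeFn_smul c (T f), hσ.ae (Lp.coeFn_smul c f), hf] with t h1 h2 h3
    rw [h1, h2, Pi.smul_apply, Pi.smul_apply, map_smul, h3, smul_comm]

theorem goodSub_closed (T : Lp H p (volume : Measure II) ≃ₗᵢ[ℝ] Lp H p (volume : Measure II))
    (σ : II → II) (hσ : Measure.QuasiMeasurePreserving σ volume volume)
    (a : II → ℝ) (S : II → H →L[ℝ] H) :
    IsClosed (goodSub T σ hσ a S : Set (Lp H p (volume : Measure II))) := by
  apply IsSeqClosed.isClosed
  intro x f hx hxf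
  obtain ⟨ns, hns, h1⟩ := (tendstoInMeasure_of_tendsto_Lp hxf).exists_seq_tendsto_ae
  have hT : Filter.Tendsto (fun n => T (x (ns n))) Filter.atTop (nhds (T f)) :=
    (T.continuous.tendsto f).comp (hxf.comp hns.tendsto_atTop)
  obtain ⟨ms, hms, h2⟩ := (tendstoInMeasure_of_tendsto_Lp hT).exists_seq_tendsto_ae
  change ∀ᵐ t, T f t = a t • S t (f (σ t))
  have hx' : ∀ n, ∀ᵐ t, T (x n) t = a t • S t (x n (σ t)) := hx
  filter_upwards [ae_all_iff.2 hx', hσ.ae h1, h2] with t b1 b2 b3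
  have b4 := b2.comp hms.tendsto_atTop
  have b5 := (((S t).continuous.tendsto _).comp b4).const_smul (a t)
  refine tendsto_nhds_unique b3 (b5.congr fun n => ?_)
  exact (b1 _).symm

theorem exists_form [TopologicalSpace.SeparableSpace H] [MeasurableSpace H] [BorelSpace H]
    (hptop : p ≠ ∞) (hp2 : p ≠ 2) {e : H} (he : ‖e‖ = 1)
    (T : Lp H p (volume : Measure II) ≃ₗᵢ[ℝ] Lp H p (volume : Measure II))
    {σ τ : II → II} (hσ : Measurable σ) (hτ : Measurable τ)
    (hc : ∀ B, MeasurableSet B → Corr T B (σ ⁻¹' B))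
    (h2 : ∀ᵐ t, τ (σ t) = t) :
    ∃ (a : II → ℝ) (S : II → H →L[ℝ] H), Measurable a ∧ (∀ᵐ t, a t ≠ 0) ∧
      (∀ h : H, Measurable fun t => S t h) ∧
      (∀ᵐ t, Function.Surjective (S t) ∧ ∀ h : H, ‖S t h‖ = ‖h‖) ∧
      ∀ f : Lp H p (volume : Measure II), ∀ᵐ t, (T f) t = a t • S t (f (σ t)) := by
  classical
  have : SecondCountableTopology H := UniformSpace.secondCountable_of_separable H
  have he0 : e ≠ 0 := by rintro rfl; simp at he
  have hqmp : Measure.QuasiMeasurePreserving σ (volume : Measure II) volume :=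
    ⟨hσ, Measure.AbsolutelyContinuous.mk fun B hB h0 => by
      rw [Measure.map_apply hσ hB]; exact ((hc B hB).null_iff he0).2 h0⟩
  obtain ⟨w, b, -⟩ := exists_hilbertBasis ℝ H
  have hw : Countable w := orthonormal_countable b.orthonormal
  let U : H → II → H := fun h => T (Lp.const p volume h)
  have hUm : ∀ h, Measurable (U h) := fun h => (Lp.stronglyMeasurable _).measurable
  let a : II → ℝ := fun t => ‖U e t‖
  have ham : Measurable a := (hUm e).norm
  have ha0 : ∀ᵐ t, a t ≠ 0 := by
    filter_upwards [const_ne_zero he0 T hτ hc h2] with t ht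
    exact norm_ne_zero_iff.2 ht
  have hnorm : ∀ h, ∀ᵐ t, ‖U h t‖ = ‖h‖ * a t := norm_const_ae hptop hp2 he T hσ hτ hc h2
  have hUadd : ∀ h k, ∀ᵐ t, U (h + k) t = U h t + U k t := by
    intro h k
    change ∀ᵐ t, T (Lp.const p volume (h + k)) t
      = T (Lp.const p volume h) t + T (Lp.const p volume k) t
    rw [map_add, map_add]
    exact Lp.coeFn_add _ _
  let v : II → w → H := fun t i => (a t)⁻¹ • U (b i) t
  have hvm : ∀ i, Measurable fun t => v t i := fun i => ham.inv.smul (hUm _)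
  let G : Set II := {t | ∀ i j, inner ℝ (v t i) (v t j) = if i = j then (1:ℝ) else 0}
  have hGm : MeasurableSet G := by
    have : G = ⋂ i, ⋂ j, {t | inner ℝ (v t i) (v t j) = if i = j then (1:ℝ) else 0} := by
      ext t; simp [G]
    rw [this]
    exact MeasurableSet.iInter fun i => MeasurableSet.iInter fun j =>
      measurableSet_eq_fun ((hvm i).inner (hvm j)) measurable_const
  have hGo : ∀ t ∈ G, Orthonormal ℝ (v t) := fun t ht => orthonormal_iff_ite.2 ht
  have hGae : ∀ᵐ t, t ∈ G := by
    have n1 := ae_all_iff.2 fun i => hnorm (b i)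
    have n2 := ae_all_iff.2 fun i => ae_all_iff.2 fun j => hnorm (b i + b j)
    have n3 := ae_all_iff.2 fun i => ae_all_iff.2 fun j => hUadd (b i) (b j)
    filter_upwards [ha0, n1, n2, n3] with t t0 t1 t2 t3 i j
    have hbn : ∀ i, ‖b i‖ = 1 := b.orthonormal.1
    have hvn : ∀ i, ‖U (b i) t‖ = a t := fun i => by rw [t1 i, hbn, one_mul]
    have hin : inner ℝ (U (b i) t) (U (b j) t) = inner ℝ (b i) (b j) * (a t)^2 := by
      have q1 := norm_add_sq_real (U (b i) t) (U (b j) t)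
      have q2 := norm_add_sq_real (b i) (b j)
      rw [← t3 i j, t2 i j, hvn, hvn, mul_pow, q2, hbn, hbn] at q1
      linarith
    simp only [v, inner_smul_left, inner_smul_right, hin]
    rw [orthonormal_iff_ite.1 b.orthonormal i j]
    split_ifs
    · simp; field_simp
    · simp
  choose! L hL using fun t (ht : t ∈ G) => exists_isometry_of_orthonormal b (hGo t ht)
  let S : II → H →L[ℝ] H := fun t => if t ∈ G then (L t).toContinuousLinearMap else 0
  have hS : ∀ t ∈ G, ∀ h, S t h = L t h := fun t ht h => by simp [S, ht]
  have hSm : ∀ h : H, Measurable fun t => S t h := by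
    intro h
    have hlim : Filter.Tendsto
        (fun (s : Finset w) (t : II) => G.indicator (fun t => ∑ i ∈ s, b.repr h i • v t i) t)
        Filter.atTop (nhds fun t => S t h) := by
      rw [tendsto_pi_nhds]
      intro t
      by_cases ht : t ∈ G
      · simp only [Set.indicator_of_mem ht, hS t ht]
        exact hL t ht h
      · simp only [Set.indicator_of_notMem ht]
        simp [S, ht]
    refine measurable_of_tendsto_metrizable' Filter.atTop (fun s => ?_) hlim
    exact (Finset.measurable_fun_sum s fun i _ => (hvm i).const_smul _).indicator hGm
  have hform : ∀ f : Lp H p (volume : Measure II), ∀ᵐ t, (T f) t = a t • S t (f (σ t)) := by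
    have hclosed := goodSub_closed T σ hqmp a S
    have hbasis : ∀ i, Lp.const p volume (b i) ∈ goodSub T σ hqmp a S := by
      intro i
      change ∀ᵐ t, U (b i) t = a t • S t ((Lp.const p volume (b i)) (σ t))
      filter_upwards [hqmp.ae (const_coe (p := p) (μ := (volume : Measure II)) (b i)), hGae, ha0]
        with t t1 t2 t3
      rw [t1, hS t t2, isometry_apply_basis b (hL t t2)]
      simp only [v]
      rw [smul_smul, mul_inv_cancel₀ t3, one_smul]
    have hconst : ∀ c : H, Lp.const p volume c ∈ goodSub T σ hqmp a S := by
      let W : Submodule ℝ H :=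
        (goodSub T σ hqmp a S).comap (Lp.constL p (volume : Measure II) ℝ).toLinearMap
      have hWc : IsClosed (W : Set H) :=
        hclosed.preimage (Lp.constL p (volume : Measure II) ℝ).continuous
      have hle : Submodule.span ℝ (Set.range b) ≤ W := by
        rw [Submodule.span_le]
        rintro _ ⟨i, rfl⟩
        exact hbasis i
      have := Submodule.topologicalClosure_minimal _ hle hWc
      rw [b.dense_span] at this
      exact fun c => this (Submodule.mem_top : c ∈ ⊤)
    intro f
    change f ∈ goodSub T σ hqmp a S
    induction f using Lp.induction hptop with
    | indicatorConst c hs hμs =>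
      rename_i s
      have e1 : (Lp.simpleFunc.indicatorConst p hs hμs.ne c : Lp H p (volume : Measure II))
          = ind s hs (Lp.const p volume c) := by
        rw [Lp.simpleFunc.coe_indicatorConst]
        apply Lp.ext
        filter_upwards [indicatorConstLp_coeFn (p := p) (hs := hs) (hμs := hμs.ne) (c := c),
          ind_coe s hs (Lp.const p volume c),
          const_coe (p := p) (μ := (volume : Measure II)) c] with t t1 t2 t3
        rw [t1, t2]
        by_cases ht : t ∈ s
        · rw [Set.indicator_of_mem ht, Set.indicator_of_mem ht, t3]
        · rw [Set.indicator_of_notMem ht, Set.indicator_of_notMem ht]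
      rw [e1]
      change ∀ᵐ t, T (ind s hs (Lp.const p volume c)) t
        = a t • S t ((ind s hs (Lp.const p volume c)) (σ t))
      rw [(hc s hs).map_ind hptop hp2 he0 hs (hσ hs)]
      have hcc : ∀ᵐ t, T (Lp.const p volume c) t = a t • S t ((Lp.const p volume c) (σ t)) :=
        hconst c
      filter_upwards [ind_coe _ (hσ hs) (T (Lp.const p volume c)),
        hqmp.ae (ind_coe s hs (Lp.const p volume c)), hcc] with t t1 t2 t3
      rw [t1, t2]
      by_cases ht : σ t ∈ s
      · rw [Set.indicator_of_mem ht, Set.indicator_of_mem (show t ∈ σ ⁻¹' s from ht), t3]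
      · rw [Set.indicator_of_notMem ht, Set.indicator_of_notMem (show t ∉ σ ⁻¹' s from ht)]
        simp
    | add hf hg _ h1 h2 => exact Submodule.add_mem _ h1 h2
    | isClosed => exact hclosed
  refine ⟨a, S, ham, ha0, hSm, ?_, hform⟩
  have hd := ae_all_iff.2 fun n : ℕ =>
    hform (T.symm (Lp.const p volume (TopologicalSpace.denseSeq H n)))
  have hd' := ae_all_iff.2 fun n : ℕ =>
    const_coe (p := p) (μ := (volume : Measure II)) (TopologicalSpace.denseSeq H n)
  filter_upwards [hGae, hd, hd'] with t t1 t2 t3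
  have hiso : ∀ h : H, ‖S t h‖ = ‖h‖ := fun h => by rw [hS t t1, LinearIsometry.norm_map]
  refine ⟨?_, hiso⟩
  have hcl : IsClosed (Set.range (S t)) := by
    have : (S t : H → H) = L t := funext (hS t t1)
    rw [this]
    exact (L t).isometry.isClosedEmbedding.isClosed_range
  have hdense : Dense (Set.range (S t)) := by
    refine (TopologicalSpace.denseRange_denseSeq H).mono ?_
    rintro _ ⟨n, rfl⟩
    have := t2 n
    rw [LinearIsometryEquiv.apply_symm_apply, t3 n, ← map_smul] at this
    exact ⟨_, this.symm⟩
  rw [← Set.range_eq_univ, ← hcl.closure_eq]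
  exact hdense.closure_eq

end form
end LpCan

open LpCan in
/-- Surjective isometries of the Bochner space `L^p([0,1]; H)`, `1 ≤ p < ∞`, `p ≠ 2`,
`H` a separable real Hilbert space of dimension at least 2, have canonical vector form
`(T f)(t) = a(t) • S(t) (f(σ t))` a.e. -/
theorem Lp_hilbert_valued_isometries_canonical_form
    (p : ℝ≥0∞) [Fact (1 ≤ p)] (hp1 : 1 ≤ p) (hptop : p ≠ ∞) (hp2 : p ≠ 2)
    {H : Type*} [NormedAddCommGroup H] [InnerProductSpace ℝ H] [CompleteSpace H]
    [TopologicalSpace.SeparableSpace H] [MeasurableSpace H] [BorelSpace H]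
    (hdim : 2 ≤ Module.rank ℝ H)
    (T : Lp H p (volume : Measure (Set.Icc (0:ℝ) 1)) →ₗ[ℝ]
         Lp H p (volume : Measure (Set.Icc (0:ℝ) 1)))
    (hTsurj : Function.Surjective T)
    (hTiso : ∀ f, ‖T f‖ = ‖f‖) :
    ∃ (a : Set.Icc (0:ℝ) 1 → ℝ) (σ : Set.Icc (0:ℝ) 1 ≃ Set.Icc (0:ℝ) 1)
      (S : Set.Icc (0:ℝ) 1 → (H →L[ℝ] H)),
      Measurable a ∧ (∀ᵐ t, a t ≠ 0) ∧
      Measurable (σ : Set.Icc (0:ℝ) 1 → Set.Icc (0:ℝ) 1) ∧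
      Measurable (σ.symm : Set.Icc (0:ℝ) 1 → Set.Icc (0:ℝ) 1) ∧
      (∀ B : Set (Set.Icc (0:ℝ) 1), MeasurableSet B →
        (volume ((σ : Set.Icc (0:ℝ) 1 → Set.Icc (0:ℝ) 1) ⁻¹' B) = 0 ↔ volume B = 0)) ∧
      (∀ h : H, Measurable fun t => S t h) ∧
      (∀ᵐ t, Function.Surjective (S t) ∧ ∀ h : H, ‖S t h‖ = ‖h‖) ∧
      ∀ f : Lp H p (volume : Measure (Set.Icc (0:ℝ) 1)),
        ∀ᵐ t, (T f) t = a t • S t (f (σ t)) := by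
  let T' : Lp H p (volume : Measure II) ≃ₗᵢ[ℝ] Lp H p (volume : Measure II) :=
    LinearIsometryEquiv.ofSurjective ⟨T, hTiso⟩ hTsurj
  have hT' : ∀ f, T' f = T f := fun f => rfl
  have hnt : Nontrivial H := by
    by_contra hn
    rw [not_nontrivial_iff_subsingleton] at hn
    rw [rank_subsingleton'] at hdim
    simp at hdim
  obtain ⟨e, he⟩ := exists_norm_eq H (zero_le_one (α := ℝ))
  have he0 : e ≠ 0 := by rintro rfl; simp at he
  obtain ⟨σ, hσ, hc⟩ := exists_point_map hptop hp2 he0 T'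
  obtain ⟨τ, hτ, hc'⟩ := exists_point_map hptop hp2 he0 T'.symm
  have h2 : ∀ᵐ t, τ (σ t) = t := by
    refine ae_inverse he0 T'.symm hτ hσ hc' ?_
    simpa using hc
  have hnull : ∀ B : Set II, MeasurableSet B → (volume (σ ⁻¹' B) = 0 ↔ volume B = 0) :=
    fun B hB => (hc B hB).null_iff he0
  obtain ⟨ρ, hρ⟩ := exists_equiv hσ hτ (fun B hB => (hnull B hB).2) h2
  obtain ⟨a, S, ham, ha0, hSm, hS, hform⟩ := exists_form hptop hp2 he T' hσ hτ hc h2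
  refine ⟨a, ρ.toEquiv, S, ham, ha0, ρ.measurable, ρ.symm.measurable, ?_, hSm, hS, ?_⟩
  · intro B hB
    rw [← hnull B hB]
    have : (ρ ⁻¹' B : Set II) =ᵐ[volume] (σ ⁻¹' B : Set II) := by
      filter_upwards [hρ] with t ht
      change (ρ t ∈ B) = (σ t ∈ B)
      rw [ht]
    have := measure_congr this
    change volume (ρ ⁻¹' B) = 0 ↔ _
    rw [this]
  · intro f
    filter_upwards [hform f, hρ] with t t1 t2
    rw [← hT', t1, ← t2]
    rfl
end

section
/- Let m ≥ 3, let d ≥ 2, and let N be a symmetric lattice norm on ℝ^m (functions Fin m → ℝ) which has property (P′) and which is not proportional to any ℓ_p-norm for 1 ≤ p ≤ ∞, i.e. there are no c > 0 and p ∈ [1, ∞] with N(x) = c·(∑ |x_i|^p)^{1/p} for all x (with the convention (∑|x_i|^∞)^{1/∞} = max_i |x_i|). Let H = ℝ^d with the Euclidean norm, and equip X = (Fin m → H) with the norm ‖f‖ = N(fun i => ‖f i‖_H). Then every surjective linear isometry T : X → X preserves disjointness in the vector sense: if f, g ∈ X satisfy ‖f i‖_H · ‖g i‖_H = 0 for every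 i, then ‖(T f) i‖_H · ‖(T g) i‖_H = 0 for every i. -/
/-- The dual norm `N′(y) = sup { ∑ i, x i * y i : N x ≤ 1 }`. -/
noncomputable def dualNorm {m : ℕ} (N : (Fin m → ℝ) → ℝ) (y : Fin m → ℝ) : ℝ :=
  sSup {s : ℝ | ∃ x : Fin m → ℝ, N x ≤ 1 ∧ s = ∑ i, x i * y i}

/-- `N` is proportional to an `ℓ_p`-norm for some `1 ≤ p ≤ ∞`
(the case `p = ∞` being the max-norm). -/
def IsLpNorm {m : ℕ} (N : (Fin m → ℝ) → ℝ) : Prop :=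
  (∃ p : ℝ, 1 ≤ p ∧ ∃ c : ℝ, 0 < c ∧
    ∀ x : Fin m → ℝ, N x = c * (∑ i, |x i| ^ p) ^ (1 / p)) ∨
  (∃ c : ℝ, 0 < c ∧ ∀ x : Fin m → ℝ, N x = c * ⨆ i, |x i|)

open MeasureTheory
section moment
variable {ι : Type*} [Fintype ι] [DecidableEq ι]

theorem aux_cov (B : Set (ι → ℝ)) (hc : IsCompact B) (h0 : B ∈ nhds (0 : ι → ℝ))
    (T : (ι → ℝ) ≃ₗ[ℝ] (ι → ℝ)) (hT : ∀ v, T v ∈ B ↔ v ∈ B) (F : (ι → ℝ) → ℝ) :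
    ∫ y in B, F (T y) = ∫ y in B, F y := by
  have hpre : (T : (ι → ℝ) →ₗ[ℝ] (ι → ℝ)) ⁻¹' B = B := by
    ext v; exact hT v
  have hdet : LinearMap.det (T : (ι → ℝ) →ₗ[ℝ] (ι → ℝ)) ≠ 0 := T.isUnit_det'.ne_zero
  have h1 := Measure.addHaar_preimage_linearMap (volume : Measure (ι → ℝ)) hdet B
  rw [hpre] at h1
  have hpos : volume B ≠ 0 := (Measure.measure_pos_of_mem_nhds _ h0).ne'
  have hfin : volume B ≠ ⊤ := hc.measure_lt_top.ne
  have h2 : ENNReal.ofReal |(LinearMap.det (T : (ι → ℝ) →ₗ[ℝ] (ι → ℝ)))⁻¹| = 1 := by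
    have : 1 * volume B = ENNReal.ofReal |(LinearMap.det (T : (ι → ℝ) →ₗ[ℝ] (ι → ℝ)))⁻¹| * volume B := by
      rw [one_mul]; exact h1
    exact ((ENNReal.mul_left_inj hpos hfin).1 this).symm
  have hmp : MeasurePreserving (T : (ι → ℝ) → (ι → ℝ)) volume volume := by
    refine ⟨(LinearMap.continuous_of_finiteDimensional (T : (ι → ℝ) →ₗ[ℝ] (ι → ℝ))).measurable, ?_⟩
    have := Measure.map_linearMap_addHaar_eq_smul_addHaar (volume : Measure (ι → ℝ)) hdet
    rw [h2, one_smul] at this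
    exact this
  have hemb : MeasurableEmbedding (T : (ι → ℝ) → (ι → ℝ)) :=
    T.toContinuousLinearEquiv.toHomeomorph.measurableEmbedding
  have := hmp.setIntegral_preimage_emb hemb F B
  rw [← this]
  congr 2
  exact hpre.symm

theorem aux_ortho (B : Set (ι → ℝ)) (hc : IsCompact B) (h0 : B ∈ nhds (0 : ι → ℝ))
    (hsign : ∀ (p : ι) (v : ι → ℝ), (fun q => if q = p then - v q else v q) ∈ B ↔ v ∈ B)
    (hperm : ∀ p q : ι, ∃ σ : Equiv.Perm ι, σ p = q ∧ ∀ v : ι → ℝ, v ∘ σ ∈ B ↔ v ∈ B)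
    (T : (ι → ℝ) ≃ₗ[ℝ] (ι → ℝ)) (hT : ∀ v, T v ∈ B ↔ v ∈ B) (x y : ι → ℝ) :
    ∑ p, T x p * T y p = ∑ p, x p * y p := by
  have hintg : ∀ F : (ι → ℝ) → ℝ, Continuous F → IntegrableOn F B := fun F hF =>
    hF.continuousOn.integrableOn_compact hc
  have hoff : ∀ p q : ι, p ≠ q → ∫ v in B, v p * v q = 0 := by
    intro p q hpq
    let L : (ι → ℝ) ≃ₗ[ℝ] (ι → ℝ) := LinearEquiv.piCongrRight
      (fun q => if q = p then LinearEquiv.neg ℝ else LinearEquiv.refl ℝ ℝ)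
    have hL : ∀ v, L v = fun q => if q = p then - v q else v q := by
      intro v; ext q
      simp only [L, LinearEquiv.piCongrRight_apply]
      split_ifs <;> simp
    have := aux_cov B hc h0 L (fun v => by rw [hL]; exact hsign p v) (fun v => v p * v q)
    simp only [hL, if_true, if_neg hpq.symm, neg_mul, integral_neg] at this
    linarith
  have hdiag : ∀ p q : ι, ∫ v in B, v p * v p = ∫ v in B, v q * v q := by
    intro p q
    obtain ⟨σ, hσ, hB⟩ := hperm p q
    have := aux_cov B hc h0 (LinearEquiv.funCongrLeft ℝ ℝ σ) (fun v => by
      rw [← hB v]; rfl) (fun v => v p * v p)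
    simp only [LinearEquiv.funCongrLeft_apply, LinearMap.funLeft_apply, hσ] at this
    exact this.symm
  rcases isEmpty_or_nonempty ι with h | ⟨⟨p0⟩⟩
  · simp
  set c := ∫ v in B, v p0 * v p0 with hcdef
  have hC : ∀ p q, ∫ v in B, v p * v q = if p = q then c else 0 := by
    intro p q
    split_ifs with h
    · subst h; exact hdiag _ _
    · exact hoff p q h
  have hcpos : 0 < c := by
    rw [hcdef, setIntegral_pos_iff_support_of_nonneg_ae]
    · have : (Function.support fun v : ι → ℝ => v p0 * v p0) ∩ B ⊇
          interior B ∩ {v | v p0 ≠ 0} := by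
        rintro v ⟨h1, h2⟩
        exact ⟨by simpa using h2, interior_subset h1⟩
      refine lt_of_lt_of_le ?_ (measure_mono this)
      refine IsOpen.measure_pos _ (isOpen_interior.inter
        (isOpen_ne_fun (continuous_apply p0) continuous_const)) ?_
      have h0' : (0 : ι → ℝ) ∈ interior B := mem_interior_iff_mem_nhds.2 h0
      have hct : Continuous fun t : ℝ => (fun _ => t : ι → ℝ) := by fun_prop
      have hev : ∀ᶠ t : ℝ in nhdsWithin 0 {0}ᶜ, (fun _ => t : ι → ℝ) ∈ interior B :=
        (hct.continuousAt.eventually (isOpen_interior.mem_nhds h0')).filter_mono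
          nhdsWithin_le_nhds
      obtain ⟨t, ht, ht'⟩ := (hev.and self_mem_nhdsWithin).exists
      exact ⟨fun _ => t, ht, ht'⟩
    · exact Filter.Eventually.of_forall fun v => mul_self_nonneg _
    · exact hintg _ (by fun_prop)
  set A : Matrix ι ι ℝ := LinearMap.toMatrix' (T : (ι → ℝ) →ₗ[ℝ] (ι → ℝ)) with hA
  have hTA : ∀ v, T v = A.mulVec v := by
    intro v
    rw [hA, ← Matrix.toLin'_apply, Matrix.toLin'_toMatrix']; rfl
  have key : A * A.transpose = 1 := by
    ext p q
    have h := aux_cov B hc h0 T hT (fun v => v p * v q)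
    rw [hC] at h
    have h2 : ∀ v : ι → ℝ, T v p * T v q = ∑ r, ∑ s, (A p r * A q s) * (v r * v s) := by
      intro v
      simp only [hTA, Matrix.mulVec, dotProduct]
      rw [Finset.sum_mul_sum]
      refine Finset.sum_congr rfl fun r _ => Finset.sum_congr rfl fun s _ => by ring
    simp only [h2] at h
    rw [integral_finsetSum _ (fun r _ => hintg _ (by fun_prop))] at h
    have h3 : ∀ r, ∫ v in B, ∑ s, (A p r * A q s) * (v r * v s) = A p r * A q r * c := by
      intro r
      rw [integral_finsetSum _ (fun s _ => hintg _ (by fun_prop))]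
      simp only [integral_const_mul, hC]
      simp
    simp only [h3] at h
    rw [← Finset.sum_mul] at h
    rw [Matrix.mul_apply, Matrix.one_apply]
    simp only [Matrix.transpose_apply]
    have := hcpos.ne'
    split_ifs at h ⊢ with hpq
    · exact mul_right_cancel₀ this (by rw [h, one_mul])
    · exact (mul_eq_zero.1 h).resolve_right this
  have key2 : A.transpose * A = 1 := mul_eq_one_comm.1 key
  change T x ⬝ᵥ T y = x ⬝ᵥ y
  rw [hTA, hTA, Matrix.dotProduct_mulVec, ← Matrix.mulVec_transpose, Matrix.mulVec_mulVec, key2,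
    Matrix.one_mulVec]
end moment

section main
variable {m d : ℕ} {N : (Fin m → ℝ) → ℝ}

theorem aux_nonneg (hN : IsSymmLatticeNorm N) (x : Fin m → ℝ) : 0 ≤ N x := by
  have h0 : N 0 = 0 := (hN.1.1.1 0).2 rfl
  rw [← h0]
  exact hN.1.2.2 0 x (fun i => by simp)

theorem aux_const (hN : IsSymmLatticeNorm N) (x : Fin m → ℝ) :
    N x ≤ ‖x‖ * N (fun _ => 1) := by
  have h := hN.1.1.2.1 ‖x‖ (fun _ => 1)
  rw [abs_of_nonneg (norm_nonneg x)] at h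
  rw [← h]
  refine hN.1.2.2 _ _ (fun i => ?_)
  simpa using norm_le_pi_norm x i

theorem aux_cont (hN : IsSymmLatticeNorm N) : Continuous N := by
  have h1 : ∀ x y, N x - N y ≤ N (fun _ => 1) * ‖x - y‖ := by
    intro x y
    have := hN.1.1.2.2 (x - y) y
    rw [sub_add_cancel] at this
    have h2 := aux_const hN (x - y)
    linarith
  have hl : LipschitzWith ⟨N (fun _ => 1), aux_nonneg hN _⟩ N := by
    refine LipschitzWith.of_dist_le_mul fun x y => ?_
    rw [Real.dist_eq, dist_eq_norm, abs_sub_le_iff]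
    refine ⟨h1 x y, ?_⟩
    rw [norm_sub_rev]
    exact h1 y x
  exact hl.continuous

theorem aux_single_pos (hN : IsSymmLatticeNorm N) (i : Fin m) :
    0 < N (Pi.single i 1) := by
  refine lt_of_le_of_ne (aux_nonneg hN _) (fun h => ?_)
  have h2 := (hN.1.1.1 _).1 h.symm
  simpa using congrFun h2 i

theorem aux_single (hN : IsSymmLatticeNorm N) (i : Fin m) (r : ℝ) (hr : 0 ≤ r) :
    N (Pi.single i r) = r * N (Pi.single i 1) := by
  have h := hN.1.1.2.1 r (Pi.single i 1)
  rw [abs_of_nonneg hr] at h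
  rw [← h]
  congr 1
  ext j
  by_cases hj : j = i
  · subst hj; simp
  · simp [hj]

theorem aux_le (hN : IsSymmLatticeNorm N) (i : Fin m) (x : Fin m → ℝ) :
    |x i| * N (Pi.single i 1) ≤ N x := by
  rw [← aux_single hN i _ (abs_nonneg _)]
  refine hN.1.2.2 _ _ (fun j => ?_)
  by_cases hj : j = i
  · subst hj; simp
  · simp [hj]

/-- flattening of the blocks -/
noncomputable def auxFlat (m d : ℕ) :
    (Fin m → EuclideanSpace ℝ (Fin d)) ≃ₗ[ℝ] (Fin m × Fin d → ℝ) :=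
  (LinearEquiv.piCongrRight (fun _ => WithLp.linearEquiv 2 ℝ (Fin d → ℝ))).trans
    (LinearEquiv.curry ℝ ℝ (Fin m) (Fin d)).symm

theorem auxFlat_apply (f : Fin m → EuclideanSpace ℝ (Fin d)) (p : Fin m × Fin d) :
    auxFlat m d f p = f p.1 p.2 := rfl

theorem auxFlat_symm_apply (v : Fin m × Fin d → ℝ) (i : Fin m) (a : Fin d) :
    (auxFlat m d).symm v i a = v (i, a) := rfl

theorem aux_flat_norm (v : Fin m × Fin d → ℝ) (i : Fin m) :
    ‖(auxFlat m d).symm v i‖ = √(∑ a, v (i, a) ^ 2) := by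
  rw [EuclideanSpace.norm_eq]
  simp [auxFlat_symm_apply]

theorem aux_isometry_ortho (hm : 3 ≤ m) (hd : 2 ≤ d) (hN : IsSymmLatticeNorm N)
    (T : (Fin m → EuclideanSpace ℝ (Fin d)) ≃ₗ[ℝ] (Fin m → EuclideanSpace ℝ (Fin d)))
    (hT : ∀ f : Fin m → EuclideanSpace ℝ (Fin d),
      N (fun i => ‖T f i‖) = N fun i => ‖f i‖)
    (x y : Fin m → EuclideanSpace ℝ (Fin d)) :
    ∑ i, inner ℝ (T x i) (T y i) = ∑ i, inner ℝ (x i) (y i) := by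
  have hMc : Continuous fun f : Fin m → EuclideanSpace ℝ (Fin d) => N (fun i => ‖f i‖) :=
    (aux_cont hN).comp (by fun_prop)
  set K : Set (Fin m → EuclideanSpace ℝ (Fin d)) := {f | N (fun i => ‖f i‖) ≤ 1} with hK
  have hKc : IsCompact K := by
    refine Metric.isCompact_of_isClosed_isBounded (isClosed_le hMc continuous_const) ?_
    rw [isBounded_iff_forall_norm_le]
    have i0 : Fin m := ⟨0, by omega⟩
    refine ⟨∑ i, 1 / N (Pi.single i 1), fun f hf => ?_⟩
    have hnn : ∀ i, 0 ≤ 1 / N (Pi.single i 1) := fun i => (one_div_pos.2 (aux_single_pos hN i)).le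
    rw [pi_norm_le_iff_of_nonneg (Finset.sum_nonneg fun i _ => hnn i)]
    intro i
    refine le_trans ?_ (Finset.single_le_sum (fun i _ => hnn i) (Finset.mem_univ i))
    rw [le_div_iff₀ (aux_single_pos hN i)]
    have := aux_le hN i (fun i => ‖f i‖)
    rw [abs_of_nonneg (norm_nonneg _)] at this
    exact this.trans hf
  have hK0 : K ∈ nhds (0 : Fin m → EuclideanSpace ℝ (Fin d)) := by
    have : {f : Fin m → EuclideanSpace ℝ (Fin d) | N (fun i => ‖f i‖) < 1} ∈ nhds 0 := by
      refine (isOpen_lt hMc continuous_const).mem_nhds ?_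
      have : N (fun i => ‖(0 : Fin m → EuclideanSpace ℝ (Fin d)) i‖) = 0 := by
        rw [hN.1.1.1]; ext; simp
      simp only [Set.mem_ofPred_eq]
      rw [this]; exact one_pos
    refine Filter.mem_of_superset this fun f hf => ?_
    have hf' : N (fun i => ‖f i‖) < 1 := hf
    exact hf'.le
  let Φ := auxFlat m d
  let H := Φ.symm.toContinuousLinearEquiv.toHomeomorph
  set B : Set (Fin m × Fin d → ℝ) := H ⁻¹' K with hB
  have hmem : ∀ v, v ∈ B ↔ N (fun i => √(∑ a, v (i, a) ^ 2)) ≤ 1 := by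
    intro v
    simp only [← aux_flat_norm]
    rfl
  have hBc : IsCompact B := H.isCompact_preimage.2 hKc
  have hB0 : B ∈ nhds (0 : Fin m × Fin d → ℝ) := by
    refine H.continuous.continuousAt.preimage_mem_nhds ?_
    have : H 0 = 0 := Φ.symm.map_zero
    rw [this]; exact hK0
  have := aux_ortho B hBc hB0 ?_ ?_ ((Φ.symm.trans T).trans Φ) ?_ (Φ x) (Φ y)
  · simp only [LinearEquiv.trans_apply, LinearEquiv.symm_apply_apply] at this
    simp only [Fintype.sum_prod_type, Φ, auxFlat_apply] at this
    simp only [PiLp.inner_apply, RCLike.inner_apply, conj_trivial]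
    simp only [mul_comm] at this ⊢
    exact this
  · intro p v
    rw [hmem, hmem]
    have : ∀ q, (if q = p then - v q else v q) ^ 2 = v q ^ 2 := by
      intro q; split_ifs <;> ring
    simp only [this]
  · intro p q
    refine ⟨Equiv.prodCongr (Equiv.swap p.1 q.1) (Equiv.swap p.2 q.2), ?_, fun v => ?_⟩
    · ext <;> simp [Prod.map]
    · rw [hmem, hmem]
      have : (fun i => √(∑ a, (v ∘ (Equiv.prodCongr (Equiv.swap p.1 q.1) (Equiv.swap p.2 q.2))) (i, a) ^ 2))
          = (fun i => √(∑ a, v (i, a) ^ 2)) ∘ (Equiv.swap p.1 q.1) := by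
        ext i
        simp only [Function.comp_apply, Equiv.prodCongr_apply, Prod.map]
        congr 1
        exact Equiv.sum_comp (Equiv.swap p.2 q.2) (fun a => v (Equiv.swap p.1 q.1 i, a) ^ 2)
      rw [this, hN.2]
  · intro v
    change N (fun i => ‖Φ.symm (Φ (T (Φ.symm v))) i‖) ≤ 1 ↔ N (fun i => ‖Φ.symm v i‖) ≤ 1
    rw [LinearEquiv.symm_apply_apply, hT]

theorem aux_exists_aligned (hd : 2 ≤ d) (w : EuclideanSpace ℝ (Fin d)) (r : ℝ) (hr : 0 ≤ r) :
    ∃ v : EuclideanSpace ℝ (Fin d), ‖v‖ = r ∧ inner ℝ v w = r * ‖w‖ := by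
  by_cases hw : w = 0
  · refine ⟨EuclideanSpace.single ⟨0, by omega⟩ r, ?_, ?_⟩
    · simp [abs_of_nonneg hr]
    · simp [hw]
  · have : ‖w‖ ≠ 0 := norm_ne_zero_iff.2 hw
    refine ⟨(r / ‖w‖) • w, ?_, ?_⟩
    · rw [norm_smul, Real.norm_of_nonneg (by positivity)]; field_simp
    · rw [real_inner_smul_left, real_inner_self_eq_norm_sq]; field_simp

theorem aux_exists_orth (hd : 2 ≤ d) (w : EuclideanSpace ℝ (Fin d)) (r : ℝ) (hr : 0 ≤ r) :
    ∃ v : EuclideanSpace ℝ (Fin d), ‖v‖ = r ∧ inner ℝ v w = 0 := by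
  obtain ⟨u, hu, hu0⟩ : ∃ u : EuclideanSpace ℝ (Fin d), inner ℝ u w = 0 ∧ u ≠ 0 := by
    let a : Fin d := ⟨0, by omega⟩
    let b : Fin d := ⟨1, by omega⟩
    have hab : a ≠ b := by simp [a, b]
    by_cases h : w a = 0
    · exact ⟨EuclideanSpace.single a 1, by simp [EuclideanSpace.inner_single_left, h], by simp⟩
    · refine ⟨EuclideanSpace.single a (w b) - EuclideanSpace.single b (w a), ?_, ?_⟩
      · rw [inner_sub_left]; simp [EuclideanSpace.inner_single_left]; ring
      · intro h0
        have := congrArg (fun z : EuclideanSpace ℝ (Fin d) => z b) h0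
        simp [hab.symm, h] at this
  have : ‖u‖ ≠ 0 := norm_ne_zero_iff.2 hu0
  refine ⟨(r / ‖u‖) • u, ?_, ?_⟩
  · rw [norm_smul, Real.norm_of_nonneg (by positivity)]; field_simp
  · rw [real_inner_smul_left, hu, mul_zero]

set_option maxHeartbeats 400000 in
/-- an isometry maps vectors supported in one block to vectors supported in one block -/
theorem aux_block (hm : 3 ≤ m) (hd : 2 ≤ d) (hN : IsSymmLatticeNorm N) (hNp : ¬ IsLpNorm N)
    (S : (Fin m → EuclideanSpace ℝ (Fin d)) ≃ₗ[ℝ] (Fin m → EuclideanSpace ℝ (Fin d)))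
    (hS : ∀ f : Fin m → EuclideanSpace ℝ (Fin d),
      N (fun i => ‖S f i‖) = N fun i => ‖f i‖)
    (k : Fin m) (e : EuclideanSpace ℝ (Fin d)) (i j : Fin m) (hij : i ≠ j)
    (hi : S (Pi.single k e) i ≠ 0) : S (Pi.single k e) j = 0 := by
  by_contra hj
  have horth := aux_isometry_ortho hm hd hN S hS
  -- normalize
  have he : e ≠ 0 := by
    rintro rfl
    simp at hi
  obtain ⟨e', he'1, hi', hj'⟩ : ∃ e' : EuclideanSpace ℝ (Fin d), ‖e'‖ = 1 ∧
      S (Pi.single k e') i ≠ 0 ∧ S (Pi.single k e') j ≠ 0 := by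
    have hne : ‖e‖⁻¹ ≠ 0 := inv_ne_zero (norm_ne_zero_iff.2 he)
    have hs : S (Pi.single k (‖e‖⁻¹ • e)) = ‖e‖⁻¹ • S (Pi.single k e) := by
      rw [← map_smul, Pi.single_smul]
    refine ⟨‖e‖⁻¹ • e, norm_smul_inv_norm (𝕜 := ℝ) he, ?_, ?_⟩
    · rw [hs]; exact smul_ne_zero hne hi
    · rw [hs]; exact smul_ne_zero hne hj
  set w := S (Pi.single k e') with hw
  let ip : (Fin m → EuclideanSpace ℝ (Fin d)) → (Fin m → EuclideanSpace ℝ (Fin d)) → ℝ :=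
    fun x y => ∑ i, inner ℝ (x i) (y i)
  have hips : ∀ z : Fin m → EuclideanSpace ℝ (Fin d), ip z (Pi.single k e') = inner ℝ (z k) e' := by
    intro z
    simp only [ip]
    rw [Finset.sum_eq_single k]
    · simp
    · intro b _ hb; simp [hb]
    · simp
  have hww : ip w w = 1 := by
    have h1 : ip w w = ip (Pi.single k e') (Pi.single k e') := horth _ _
    rw [h1, hips, Pi.single_eq_same, real_inner_self_eq_norm_sq, he'1]; norm_num
  -- reflection in w is an isometry
  have hrefl : ∀ x : Fin m → EuclideanSpace ℝ (Fin d),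
      N (fun p => ‖x p - (2 * ip x w) • w p‖) = N (fun p => ‖x p‖) := by
    intro x
    obtain ⟨z, rfl⟩ := S.surjective x
    have h1 : ip (S z) w = inner ℝ (z k) e' := by
      rw [← hips]; exact horth _ _
    have h2 : (fun p => ‖S z p - (2 * ip (S z) w) • w p‖) =
        fun p => ‖S (z - (2 * ip (S z) w) • (Pi.single k e' : Fin m → EuclideanSpace ℝ (Fin d))) p‖ := by
      ext p
      rw [map_sub, map_smul]; rfl
    rw [h2, hS, hS, h1]
    congr 1
    ext p
    by_cases hp : p = k
    · subst hp
      simp only [Pi.sub_apply, Pi.smul_apply, Pi.single_eq_same]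
      rw [← sq_eq_sq₀ (norm_nonneg _) (norm_nonneg _), norm_sub_sq_real, norm_smul,
        real_inner_smul_right, he'1, mul_one, Real.norm_eq_abs, sq_abs]
      ring
    · simp [hp]
  have hMc : Continuous fun f : Fin m → EuclideanSpace ℝ (Fin d) => N (fun i => ‖f i‖) :=
    (aux_cont hN).comp (by fun_prop)
  have main : ∀ x : Fin m → EuclideanSpace ℝ (Fin d),
      N (fun p => ‖x p‖) = √(∑ p, ‖x p‖ ^ 2) * N (Pi.single i 1) := by
    intro x
    set L : Set (Fin m → EuclideanSpace ℝ (Fin d)) :=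
      {y | N (fun p => ‖y p‖) = N (fun p => ‖x p‖) ∧ ∑ p, ‖y p‖ ^ 2 = ∑ p, ‖x p‖ ^ 2} with hL
    have hLc : IsCompact L := by
      refine Metric.isCompact_of_isClosed_isBounded
        ((isClosed_eq hMc continuous_const).inter (isClosed_eq (by fun_prop) continuous_const)) ?_
      rw [isBounded_iff_forall_norm_le]
      refine ⟨√(∑ p, ‖x p‖ ^ 2), fun f hf => ?_⟩
      rw [pi_norm_le_iff_of_nonneg (Real.sqrt_nonneg _)]
      intro p
      apply Real.le_sqrt_of_sq_le
      rw [← hf.2]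
      exact Finset.single_le_sum (f := fun p => ‖f p‖ ^ 2) (fun p _ => sq_nonneg _)
        (Finset.mem_univ p)
    obtain ⟨y, hyL, hymax⟩ := hLc.exists_isMaxOn ⟨x, rfl, rfl⟩
      (f := fun y : Fin m → EuclideanSpace ℝ (Fin d) => ‖y i‖) (by fun_prop)
    have hymax' : ∀ z ∈ L, ‖z i‖ ≤ ‖y i‖ := fun z hz => isMaxOn_iff.1 hymax z hz
    have hy0 : ∀ l, l ≠ i → y l = 0 := by
      intro l hl
      by_contra hyl
      let π : Equiv.Perm (Fin m) := Equiv.swap j l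
      have hπi : π i = i := Equiv.swap_apply_of_ne_of_ne hij hl.symm
      have hex : ∀ p, ∃ v : EuclideanSpace ℝ (Fin d), ‖v‖ = ‖y (π p)‖ ∧
          inner ℝ v (w p) = if p = i then 0 else ‖y (π p)‖ * ‖w p‖ := by
        intro p
        split_ifs with h
        · exact aux_exists_orth hd _ _ (norm_nonneg _)
        · exact aux_exists_aligned hd _ _ (norm_nonneg _)
      choose y' hy'1 hy'2 using hex
      have hy'N : N (fun p => ‖y' p‖) = N (fun p => ‖y p‖) := by
        simp only [hy'1]
        exact hN.2 π (fun p => ‖y p‖)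
      have hy's : ∑ p, ‖y' p‖ ^ 2 = ∑ p, ‖y p‖ ^ 2 := by
        simp only [hy'1]
        exact Equiv.sum_comp π (fun p => ‖y p‖ ^ 2)
      have hc : 0 < ip y' w := by
        simp only [ip, hy'2]
        refine Finset.sum_pos' (fun p _ => by split_ifs <;> positivity)
          ⟨j, Finset.mem_univ _, ?_⟩
        rw [if_neg hij.symm]
        have : π j = l := Equiv.swap_apply_left _ _
        rw [this]
        exact mul_pos (norm_pos_iff.2 hyl) (norm_pos_iff.2 hj')
      set c := ip y' w with hcdef
      have hnorm : ∀ p, ‖y' p - (2 * c) • w p‖ ^ 2 =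
          ‖y' p‖ ^ 2 - 4 * c * inner ℝ (y' p) (w p) + 4 * c ^ 2 * ‖w p‖ ^ 2 := by
        intro p
        rw [norm_sub_sq_real, norm_smul, real_inner_smul_right, Real.norm_eq_abs, mul_pow, sq_abs]
        ring
      have hmem : (fun p => y' p - (2 * c) • w p) ∈ L := by
        refine ⟨?_, ?_⟩
        · rw [hrefl, hy'N, hyL.1]
        · simp only [hnorm]
          rw [Finset.sum_add_distrib, Finset.sum_sub_distrib, ← Finset.mul_sum, ← Finset.mul_sum,
            hy's, hyL.2]
          have h1 : ∑ p, inner ℝ (y' p) (w p) = c := rfl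
          have h2 : ∑ p, ‖w p‖ ^ 2 = 1 := by
            rw [← hww]
            simp only [ip, real_inner_self_eq_norm_sq]
          rw [h1, h2]; ring
      have hle := hymax' (fun p => y' p - (2 * c) • w p) hmem
      beta_reduce at hle
      have h3 := pow_le_pow_left₀ (norm_nonneg _) hle 2
      rw [hnorm, hy'2, hy'1, hπi] at h3
      have : 0 < ‖w i‖ := norm_pos_iff.2 hi'
      have : 0 < c ^ 2 * ‖w i‖ ^ 2 := by positivity
      simp at h3
      nlinarith
    have hys : (fun p => ‖y p‖) = Pi.single i ‖y i‖ := by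
      ext p
      by_cases hp : p = i
      · subst hp; simp
      · simp [hp, hy0 p hp]
    rw [← hyL.1, ← hyL.2, hys, aux_single hN i _ (norm_nonneg _), Finset.sum_eq_single i]
    · rw [Real.sqrt_sq (norm_nonneg _)]
    · intro b _ hb; simp [hy0 b hb]
    · simp
  refine hNp (Or.inl ⟨2, by norm_num, N (Pi.single i 1), aux_single_pos hN i, fun x => ?_⟩)
  have hnx : ∀ p, ‖(fun p => EuclideanSpace.single ⟨0, by omega⟩ (x p) :
      Fin m → EuclideanSpace ℝ (Fin d)) p‖ = |x p| := by
    intro p; simp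
  have h := main (fun p => EuclideanSpace.single ⟨0, by omega⟩ (x p))
  simp only [hnx] at h
  rw [hN.1.2.1 x, h, mul_comm, Real.sqrt_eq_rpow]
  norm_num
end main

theorem surjective_isometry_preserves_vector_disjointness_of_euclidean
    {m d : ℕ} (hm : 3 ≤ m) (hd : 2 ≤ d) (N : (Fin m → ℝ) → ℝ)
    (hN : IsSymmLatticeNorm N)
    (hP' : ∀ t : ℝ, 0 < t →
      dualNorm N (Pi.single (⟨0, by omega⟩ : Fin m) (1 : ℝ)) <
      dualNorm N (Pi.single (⟨0, by omega⟩ : Fin m) (1 : ℝ) +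
        t • (Pi.single (⟨1, by omega⟩ : Fin m) (1 : ℝ) : Fin m → ℝ)))
    (hNp : ¬ IsLpNorm N)
    (T : (Fin m → EuclideanSpace ℝ (Fin d)) →ₗ[ℝ] (Fin m → EuclideanSpace ℝ (Fin d)))
    (hTsurj : Function.Surjective T)
    (hTiso : ∀ f : Fin m → EuclideanSpace ℝ (Fin d),
      N (fun i => ‖T f i‖) = N fun i => ‖f i‖)
    (f g : Fin m → EuclideanSpace ℝ (Fin d)) (hfg : ∀ i, ‖f i‖ * ‖g i‖ = 0) :
    ∀ i, ‖T f i‖ * ‖T g i‖ = 0 := by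
  have hinj : Function.Injective T := by
    rw [← LinearMap.ker_eq_bot, LinearMap.ker_eq_bot']
    intro z hz
    have h := hTiso z
    have h0 : N (fun i => ‖T z i‖) = 0 := by
      rw [hN.1.1.1, hz]; ext; simp
    rw [h0] at h
    have := (hN.1.1.1 _).1 h.symm
    ext1 i
    exact norm_eq_zero.1 (congrFun this i)
  let S := LinearEquiv.ofBijective T ⟨hinj, hTsurj⟩
  have hS : ∀ z, S z = T z := fun z => rfl
  have hS1 : ∀ f : Fin m → EuclideanSpace ℝ (Fin d),
      N (fun i => ‖S f i‖) = N fun i => ‖f i‖ := hTiso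
  have hS2 : ∀ f : Fin m → EuclideanSpace ℝ (Fin d),
      N (fun i => ‖S.symm f i‖) = N fun i => ‖f i‖ := by
    intro f
    rw [← hS1, LinearEquiv.apply_symm_apply]
  intro i
  by_contra hne
  obtain ⟨hf, hg⟩ := mul_ne_zero_iff.1 hne
  have hdec : ∀ z : Fin m → EuclideanSpace ℝ (Fin d), ‖T z i‖ ≠ 0 →
      ∃ k, S (Pi.single k (z k)) i ≠ 0 := by
    intro z hz
    by_contra! hall
    apply hz
    have hz' : z = ∑ k, Pi.single k (z k) := (Finset.univ_sum_single z).symm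
    rw [hz', map_sum, Finset.sum_apply, norm_eq_zero]
    exact Finset.sum_eq_zero fun k _ => hall k
  obtain ⟨k, hk⟩ := hdec f hf
  obtain ⟨l, hl⟩ := hdec g hg
  have hfk : f k ≠ 0 := by
    intro h; simp [h] at hk
  have hgl : g l ≠ 0 := by
    intro h; simp [h] at hl
  have hkl : k ≠ l := by
    rintro rfl
    rcases mul_eq_zero.1 (hfg k) with h | h
    · exact hfk (norm_eq_zero.1 h)
    · exact hgl (norm_eq_zero.1 h)
  have hsum : S (Pi.single k (f k) + Pi.single l (g l)) =
      Pi.single i (S (Pi.single k (f k) + Pi.single l (g l)) i) := by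
    ext1 j
    by_cases hj : j = i
    · subst hj; simp
    · rw [Pi.single_eq_of_ne hj, map_add, Pi.add_apply,
        aux_block hm hd hN hNp S hS1 k (f k) i j (Ne.symm hj) hk,
        aux_block hm hd hN hNp S hS1 l (g l) i j (Ne.symm hj) hl, add_zero]
  have hback := congrArg S.symm hsum
  rw [LinearEquiv.symm_apply_apply] at hback
  have h1 : (Pi.single k (f k) + Pi.single l (g l) : Fin m → EuclideanSpace ℝ (Fin d)) k ≠ 0 := by
    simpa [hkl] using hfk
  have h2 : (Pi.single k (f k) + Pi.single l (g l) : Fin m → EuclideanSpace ℝ (Fin d)) l ≠ 0 := by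
    simpa [hkl.symm] using hgl
  rw [hback] at h1 h2
  exact h2 (aux_block hm hd hN hNp S.symm hS2 i _ k l hkl h1)
end

section
/- Let m ≥ 3 and let N be a symmetric lattice norm on ℝ^m (functions Fin m → ℝ) which has property (P′) and which is not proportional to any ℓ_p-norm for 1 ≤ p ≤ ∞ (no c > 0 and p ∈ [1,∞] with N(x) = c·(∑|x_i|^p)^{1/p} for all x, where p = ∞ gives the max-norm). Let H be a real Hilbert space with dim H ≥ 2 (finite-dimensional or separable infinite-dimensional), and equip X = (Fin m → H) with the norm ‖f‖ = N(fun i => ‖f i‖_H). Then every Flinn element u = (u_i)_{i} of X is supported on a single coordinate: there exists i₀ such that u i = 0 for all i ≠ i₀. -/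
open scoped RealInnerProductSpace

/-- The norm on `Fin m → H` induced by the norm `N`:  `‖f‖ = N (fun i => ‖f i‖)`. -/
noncomputable def XNorm {m : ℕ} (N : (Fin m → ℝ) → ℝ) {H : Type*} [NormedAddCommGroup H]
    (f : Fin m → H) : ℝ := N fun i => ‖f i‖

/-- The dual norm of the norm `XNorm N` on `Fin m → H`, where a vector `g : Fin m → H`
is identified with the functional `f ↦ ∑ i, ⟪g i, f i⟫`. -/
noncomputable def XDualNorm {m : ℕ} (N : (Fin m → ℝ) → ℝ) {H : Type*} [NormedAddCommGroup H]
    [InnerProductSpace ℝ H] (g : Fin m → H) : ℝ :=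
  sSup {s : ℝ | ∃ f : Fin m → H, XNorm N f ≤ 1 ∧ s = ∑ i, ⟪g i, f i⟫}

/-- `(u, g)` is a Flinn pair in `(Fin m → H, XNorm N)`, where every continuous linear
functional is represented by a vector `xs : Fin m → H` via `x ↦ ∑ i, ⟪xs i, x i⟫`. -/
def IsVFlinnPair {m : ℕ} (N : (Fin m → ℝ) → ℝ) {H : Type*} [NormedAddCommGroup H]
    [InnerProductSpace ℝ H] (u g : Fin m → H) : Prop :=
  g ≠ 0 ∧ ∀ x xs : Fin m → H,
    (∑ i, ⟪xs i, x i⟫) = XNorm N x * XDualNorm N xs →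
    0 ≤ (∑ i, ⟪g i, x i⟫) * (∑ i, ⟪xs i, u i⟫)

/-- `u` is a Flinn element of `(Fin m → H, XNorm N)`. -/
def IsVFlinn {m : ℕ} (N : (Fin m → ℝ) → ℝ) {H : Type*} [NormedAddCommGroup H]
    [InnerProductSpace ℝ H] (u : Fin m → H) : Prop :=
  ∃ g, IsVFlinnPair N u g

namespace FlinnAux

/-- Norming pair for the real norm. -/
def Nm {m : ℕ} (N : (Fin m → ℝ) → ℝ) (a b : Fin m → ℝ) : Prop :=
  0 < N a ∧ ∀ x : Fin m → ℝ, N a * ∑ i, x i * b i ≤ N x * ∑ i, a i * b i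

theorem N_nonneg {m : ℕ} {N : (Fin m → ℝ) → ℝ} (h : IsNorm N) (x : Fin m → ℝ) : 0 ≤ N x := by
  have h1 := h.2.2 x ((-1 : ℝ) • x)
  rw [h.2.1] at h1
  have h2 : x + (-1 : ℝ) • x = 0 := by simp
  rw [h2, (h.1 0).2 rfl] at h1
  norm_num at h1
  linarith

theorem N_pos {m : ℕ} {N : (Fin m → ℝ) → ℝ} (h : IsNorm N) {x : Fin m → ℝ} (hx : x ≠ 0) :
    0 < N x :=
  lt_of_le_of_ne (N_nonneg h x) (fun h0 => hx ((h.1 x).1 h0.symm))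

theorem Nm.dual {m : ℕ} {N : (Fin m → ℝ) → ℝ} (h : IsNorm N) {a b : Fin m → ℝ} (hab : Nm N a b) :
    ∑ i, a i * b i = N a * dualNorm N b := by
  obtain ⟨ha, hab⟩ := hab
  have hS : 0 ≤ ∑ i, a i * b i := by
    have h1 := hab ((-1 : ℝ) • a)
    rw [h.2.1] at h1
    simp only [Pi.smul_apply, smul_eq_mul, neg_mul, one_mul, Finset.sum_neg_distrib, abs_neg,
      abs_one] at h1
    nlinarith
  have hg : IsGreatest {s : ℝ | ∃ x : Fin m → ℝ, N x ≤ 1 ∧ s = ∑ i, x i * b i}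
      ((∑ i, a i * b i) / N a) := by
    constructor
    · refine ⟨(N a)⁻¹ • a, ?_, ?_⟩
      · rw [h.2.1, abs_of_pos (inv_pos.2 ha), inv_mul_cancel₀ ha.ne']
      · simp only [Pi.smul_apply, smul_eq_mul, mul_assoc, ← Finset.mul_sum]
        field_simp
    · rintro s ⟨x, hx, rfl⟩
      rw [le_div_iff₀ ha]
      have := hab x
      nlinarith
  rw [dualNorm, hg.csSup_eq]
  field_simp

theorem XDual_eq {m : ℕ} {N : (Fin m → ℝ) → ℝ} (h : IsLatticeNorm N)
    {H : Type*} [NormedAddCommGroup H] [InnerProductSpace ℝ H] (b : Fin m → ℝ) (w : Fin m → H)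
    (hw : ∀ i, ‖w i‖ = 1) : XDualNorm N (fun i => b i • w i) = dualNorm N b := by
  unfold XDualNorm dualNorm
  congr 1
  ext s
  constructor
  · rintro ⟨f, hf, rfl⟩
    refine ⟨fun i => ⟪w i, f i⟫, le_trans (h.2.2 _ _ fun i => ?_) hf, ?_⟩
    · rw [abs_of_nonneg (norm_nonneg (f i))]
      have := abs_real_inner_le_norm (w i) (f i)
      rwa [hw, one_mul] at this
    · refine Finset.sum_congr rfl fun i _ => ?_
      rw [real_inner_smul_left, mul_comm]
  · rintro ⟨x, hx, rfl⟩
    refine ⟨fun i => x i • w i, ?_, ?_⟩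
    · unfold XNorm
      have : (fun i => ‖x i • w i‖) = fun i => |x i| := by
        ext i; rw [norm_smul, hw, mul_one, Real.norm_eq_abs]
      rw [this, ← h.2.1]; exact hx
    · refine Finset.sum_congr rfl fun i _ => ?_
      rw [real_inner_smul_left, real_inner_smul_right, real_inner_self_eq_norm_sq, hw]
      ring

theorem flinn_real {m : ℕ} {N : (Fin m → ℝ) → ℝ} (h : IsLatticeNorm N)
    {H : Type*} [NormedAddCommGroup H] [InnerProductSpace ℝ H] {u g : Fin m → H}
    (hF : IsVFlinnPair N u g) {a b : Fin m → ℝ} (hab : Nm N a b) (w : Fin m → H)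
    (hw : ∀ i, ‖w i‖ = 1) :
    0 ≤ (∑ i, a i * ⟪g i, w i⟫) * (∑ i, b i * ⟪u i, w i⟫) := by
  have h1 := hF.2 (fun i => a i • w i) (fun i => b i • w i) ?_
  · simp only [real_inner_smul_left, real_inner_smul_right] at h1
    simpa only [real_inner_comm] using h1
  · rw [XDual_eq h b w hw]
    have : XNorm N (fun i => a i • w i) = N a := by
      unfold XNorm
      have : (fun i => ‖a i • w i‖) = fun i => |a i| := by
        ext i; rw [norm_smul, hw, mul_one, Real.norm_eq_abs]
      rw [this, ← h.2.1]
    rw [this, ← hab.dual h.1]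
    refine Finset.sum_congr rfl fun i _ => ?_
    rw [real_inner_smul_left, real_inner_smul_right, real_inner_self_eq_norm_sq, hw]
    ring

theorem Nm_single {m : ℕ} {N : (Fin m → ℝ) → ℝ} (h : IsLatticeNorm N) (i : Fin m) :
    Nm N (Pi.single i 1) (Pi.single i 1) := by
  refine ⟨N_pos h.1 (by simp), fun x => ?_⟩
  have h1 : N (x i • (Pi.single i 1 : Fin m → ℝ)) ≤ N x := by
    apply h.2.2
    intro j
    by_cases hj : j = i
    · subst hj; simp
    · simp [hj]
  rw [h.1.2.1] at h1
  simp only [Pi.single_apply, mul_ite, mul_one, mul_zero, Finset.sum_ite_eq', Finset.mem_univ,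
    if_true]
  have := N_nonneg h.1 (Pi.single i 1)
  have h2 := mul_le_mul_of_nonneg_right (le_abs_self (x i)) this
  linarith

theorem N_sum_le {m : ℕ} {N : (Fin m → ℝ) → ℝ} (h : IsNorm N) {ι : Type*} (s : Finset ι)
    (f : ι → Fin m → ℝ) : N (∑ k ∈ s, f k) ≤ ∑ k ∈ s, N (f k) := by
  classical
  induction s using Finset.induction_on with
  | empty => simp [(h.1 0).2 rfl]
  | insert a s ha ih =>
    rw [Finset.sum_insert ha, Finset.sum_insert ha]
    have := h.2.2 (f a) (∑ k ∈ s, f k)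
    linarith

theorem Nm_one {m : ℕ} [NeZero m] {N : (Fin m → ℝ) → ℝ} (h : IsSymmLatticeNorm N) :
    Nm N (fun _ => 1) (fun _ => 1) := by
  refine ⟨N_pos h.1.1 ?_, fun x => ?_⟩
  · intro h0
    have := congrFun h0 0
    simp at this
  have h1 := N_sum_le h.1.1 Finset.univ (fun k : Fin m => x ∘ (Equiv.addRight k))
  simp only [h.2, Finset.sum_const, Finset.card_univ, Fintype.card_fin, nsmul_eq_mul] at h1
  have h2 : (∑ k : Fin m, x ∘ (Equiv.addRight k)) = (∑ i, x i) • (fun _ => (1 : ℝ)) := by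
    ext j
    simp only [Finset.sum_apply, Function.comp_apply, Equiv.coe_addRight, Pi.smul_apply,
      smul_eq_mul, mul_one]
    exact Equiv.sum_comp (Equiv.addLeft j) x
  rw [h2, h.1.1.2.1] at h1
  have := N_nonneg h.1.1 (fun _ => 1)
  have h3 := mul_le_mul_of_nonneg_right (le_abs_self (∑ i, x i)) this
  simp only [mul_one, Finset.sum_const, Finset.card_univ, Fintype.card_fin, nsmul_eq_mul]
  linarith

theorem Nm.perm {m : ℕ} {N : (Fin m → ℝ) → ℝ} (h : IsSymmLatticeNorm N) {a b : Fin m → ℝ}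
    (hab : Nm N a b) (π : Equiv.Perm (Fin m)) : Nm N (a ∘ π) (b ∘ π) := by
  refine ⟨by rw [h.2]; exact hab.1, fun x => ?_⟩
  have h1 := hab.2 (x ∘ π.symm)
  rw [h.2] at h1 ⊢
  have e1 : ∑ i, (x ∘ π.symm) i * b i = ∑ i, x i * (b ∘ π) i := by
    rw [← Equiv.sum_comp π]; simp
  have e2 : ∑ i, a i * b i = ∑ i, (a ∘ π) i * (b ∘ π) i := by
    rw [← Equiv.sum_comp π]; simp
  rw [← e1, ← e2]; exact h1

theorem exists_Nm {m : ℕ} {N : (Fin m → ℝ) → ℝ} (h : IsNorm N) {a : Fin m → ℝ} (ha : a ≠ 0) :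
    ∃ b : Fin m → ℝ, ∑ i, a i * b i = N a ∧ ∀ x : Fin m → ℝ, ∑ i, x i * b i ≤ N x := by
  obtain ⟨φ, h1, h2⟩ := exists_extension_of_le_sublinear
    (LinearPMap.mkSpanSingleton (K := ℝ) a (N a) ha) N
    (fun c hc x => by rw [h.2.1, abs_of_pos hc]) h.2.2 (by
      rintro ⟨x, hx⟩
      obtain ⟨c, rfl⟩ := Submodule.mem_span_singleton.1 hx
      unfold LinearPMap.mkSpanSingleton
      rw [LinearPMap.mkSpanSingleton'_apply, h.2.1, smul_eq_mul]
      exact mul_le_mul_of_nonneg_right (le_abs_self c) (N_nonneg h a))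
  have key : ∀ x : Fin m → ℝ, φ x = ∑ i, x i * φ (Pi.single i 1) := by
    intro x
    conv_lhs => rw [pi_eq_sum_univ' x]
    simp [map_sum]
  refine ⟨fun i => φ (Pi.single i 1), ?_, fun x => ?_⟩
  · rw [← key]
    have := h1 ⟨a, Submodule.mem_span_singleton_self a⟩
    rw [this]
    exact LinearPMap.mkSpanSingleton_apply ℝ ℝ ha (N a)
  · rw [← key]; exact h2 x

theorem parallel {H : Type*} [NormedAddCommGroup H] [InnerProductSpace ℝ H] [Nontrivial H]
    (g u : H) (hgu : ∀ w : H, ‖w‖ = 1 → 0 ≤ ⟪g, w⟫ * ⟪u, w⟫) :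
    ∃ (w : H) (c d : ℝ), ‖w‖ = 1 ∧ g = c • w ∧ u = d • w := by
  have hgu' : ∀ w : H, 0 ≤ ⟪g, w⟫ * ⟪u, w⟫ := by
    intro w
    by_cases hw : w = 0
    · simp [hw]
    have hn : 0 < ‖w‖ := norm_pos_iff.2 hw
    have := hgu (‖w‖⁻¹ • w) (by rw [norm_smul, norm_inv, norm_norm, inv_mul_cancel₀ hn.ne'])
    rw [real_inner_smul_right, real_inner_smul_right] at this
    have e : ⟪g, w⟫ * ⟪u, w⟫ = ‖w‖ ^ 2 * ((‖w‖⁻¹ * ⟪g, w⟫) * (‖w‖⁻¹ * ⟪u, w⟫)) := by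
      field_simp
    rw [e]; positivity
  have hunit : ∀ v : H, ∃ (w : H) (c : ℝ), ‖w‖ = 1 ∧ v = c • w := by
    intro v
    by_cases hv : v = 0
    · obtain ⟨w, hw⟩ := exists_norm_eq H (zero_le_one (α := ℝ))
      exact ⟨w, 0, hw, by simp [hv]⟩
    · have hn : 0 < ‖v‖ := norm_pos_iff.2 hv
      exact ⟨‖v‖⁻¹ • v, ‖v‖, by rw [norm_smul, norm_inv, norm_norm, inv_mul_cancel₀ hn.ne'],
        by rw [smul_smul, mul_inv_cancel₀ hn.ne', one_smul]⟩
  by_cases hu : u = 0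
  · obtain ⟨w, c, hw, hg⟩ := hunit g
    exact ⟨w, c, 0, hw, hg, by simp [hu]⟩
  obtain ⟨w, d, hw, hud⟩ := hunit u
  have hd : d ≠ 0 := by rintro rfl; simp at hud; exact hu hud
  refine ⟨w, ⟪g, w⟫, d, hw, ?_, hud⟩
  set c := ⟪g, w⟫ with hc
  set r := g - c • w with hr
  have hww : ⟪w, w⟫ = (1 : ℝ) := by rw [real_inner_self_eq_norm_sq, hw]; norm_num
  have hrw : ⟪w, r⟫ = 0 := by
    rw [hr, inner_sub_right, real_inner_smul_right, hww, real_inner_comm, ← hc]; ring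
  have hgr : ⟪g, r⟫ = ⟪r, r⟫ := by
    have : g = r + c • w := by rw [hr]; abel
    conv_lhs => rw [this]
    rw [inner_add_left, real_inner_smul_left, hrw]; ring
  have hq : ∀ s : ℝ, 0 ≤ (c * s + ⟪r, r⟫) * (d * s) := by
    intro s
    have := hgu' (s • w + r)
    rw [hud, real_inner_smul_left] at this
    rw [inner_add_right, inner_add_right, hrw, hgr, real_inner_smul_right, real_inner_smul_right,
      hww, ← hc] at this
    convert this using 1; ring
  have hrr : (0:ℝ) ≤ ⟪r, r⟫ := real_inner_self_nonneg
  have hr0 : ⟪r, r⟫ = (0 : ℝ) := by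
    by_contra hne
    have hpos : (0:ℝ) < ⟪r, r⟫ := lt_of_le_of_ne hrr (Ne.symm hne)
    set R : ℝ := ⟪r, r⟫
    -- the quadratic `c d s ^ 2 + R d s` is nonnegative, hence `(R d) ^ 2 ≤ 0`
    have := discrim_le_zero (a := c * d) (b := R * d) (c := 0) (fun s => by
      have := hq s
      nlinarith)
    unfold discrim at this
    have : 0 < (R * d) ^ 2 := by positivity
    nlinarith
  rw [inner_self_eq_zero] at hr0
  exact sub_eq_zero.1 hr0

theorem exists_perp {H : Type*} [NormedAddCommGroup H] [InnerProductSpace ℝ H]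
    (hdim : 2 ≤ Module.rank ℝ H) (w : H) (hw : ‖w‖ = 1) : ∃ v : H, ‖v‖ = 1 ∧ ⟪w, v⟫ = 0 := by
  have hex : ∃ x : H, x ∉ Submodule.span ℝ {w} := by
    by_contra! hall
    have htop : Submodule.span ℝ {w} = ⊤ := by
      rw [eq_top_iff]; intro x _; exact hall x
    have h1 := rank_span_le (R := ℝ) ({w} : Set H)
    rw [htop, rank_top, Cardinal.mk_singleton] at h1
    have := hdim.trans h1
    norm_num at this
  obtain ⟨x, hx⟩ := hex
  set r := x - ⟪w, x⟫ • w with hr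
  have hr0 : r ≠ 0 := by
    intro h0
    apply hx
    rw [sub_eq_zero.1 h0]
    exact Submodule.smul_mem _ _ (Submodule.mem_span_singleton_self w)
  have hn : 0 < ‖r‖ := norm_pos_iff.2 hr0
  refine ⟨‖r‖⁻¹ • r, by rw [norm_smul, norm_inv, norm_norm, inv_mul_cancel₀ hn.ne'], ?_⟩
  rw [real_inner_smul_right, hr, inner_sub_right, real_inner_smul_right,
    real_inner_self_eq_norm_sq, hw]
  ring

theorem exists_inner_eq {H : Type*} [NormedAddCommGroup H] [InnerProductSpace ℝ H]
    (hdim : 2 ≤ Module.rank ℝ H) (w : H) (hw : ‖w‖ = 1) (t : ℝ) (ht : |t| ≤ 1) :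
    ∃ v : H, ‖v‖ = 1 ∧ ⟪w, v⟫ = t := by
  obtain ⟨v, hv, hwv⟩ := exists_perp hdim w hw
  have ht2 : 0 ≤ 1 - t ^ 2 := by
    have := (sq_le_one_iff_abs_le_one t).2 ht
    linarith
  have hww : ⟪w, w⟫ = (1 : ℝ) := by rw [real_inner_self_eq_norm_sq, hw]; norm_num
  have hvv : ⟪v, v⟫ = (1 : ℝ) := by rw [real_inner_self_eq_norm_sq, hv]; norm_num
  have hvw : ⟪v, w⟫ = (0 : ℝ) := by rw [real_inner_comm]; exact hwv
  refine ⟨t • w + √(1 - t ^ 2) • v, ?_, ?_⟩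
  · have : ‖t • w + √(1 - t ^ 2) • v‖ ^ 2 = 1 := by
      rw [← real_inner_self_eq_norm_sq]
      simp only [inner_add_left, inner_add_right, real_inner_smul_left, real_inner_smul_right,
        hww, hvv, hvw, hwv]
      have := Real.sq_sqrt ht2
      nlinarith
    have h0 := norm_nonneg (t • w + √(1 - t ^ 2) • v)
    nlinarith
  · rw [inner_add_right, real_inner_smul_right, real_inner_smul_right, hww, hwv]; ring

/-- A nonnegative product of two linear forms in two variables forces parallelism. -/
theorem parallel_forms {P Q R S : ℝ}
    (h : ∀ x y : ℝ, |x| ≤ 1 → |y| ≤ 1 → 0 ≤ (P * x + Q * y) * (R * x + S * y)) :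
    P * S = Q * R := by
  have h' : ∀ x y : ℝ, 0 ≤ (P * x + Q * y) * (R * x + S * y) := by
    intro x y
    have hM : 0 < |x| + |y| + 1 := by positivity
    set M := |x| + |y| + 1 with hMd
    have := h (x / M) (y / M)
      (by rw [abs_div, abs_of_pos hM, div_le_one hM]; have := abs_nonneg y; linarith)
      (by rw [abs_div, abs_of_pos hM, div_le_one hM]; have := abs_nonneg x; linarith)
    have e : (P * x + Q * y) * (R * x + S * y) =
        M ^ 2 * ((P * (x / M) + Q * (y / M)) * (R * (x / M) + S * (y / M))) := by
      field_simp
    rw [e]; positivity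
  have := discrim_le_zero (a := P * R) (b := P * S + Q * R) (c := Q * S) (fun x => by
    have := h' x 1
    nlinarith)
  unfold discrim at this
  have h2 : (P * S - Q * R) ^ 2 ≤ 0 := by nlinarith
  have h3 : P * S - Q * R = 0 := by nlinarith [sq_nonneg (P * S - Q * R)]
  linarith

/-- A function with `|n s - n t| ≤ K (s - t) ^ 2` is constant. -/
theorem const_of_sq {n : ℝ → ℝ} {K : ℝ} (h : ∀ s t, n s - n t ≤ K * (s - t) ^ 2) (s t : ℝ) :
    n s = n t := by
  have hd : ∀ s, HasDerivAt n 0 s := by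
    intro s
    rw [hasDerivAt_iff_isLittleO]
    have h1 : (fun t => n t - n s - (t - s) • (0 : ℝ)) =O[nhds s] fun t => (t - s) ^ 2 := by
      refine Asymptotics.IsBigO.of_bound K (Filter.Eventually.of_forall fun t => ?_)
      have h1 := h s t
      have h2 := h t s
      rw [Real.norm_eq_abs, Real.norm_eq_abs, abs_of_nonneg (sq_nonneg (t - s)), abs_le]
      simp only [smul_zero, sub_zero]
      constructor <;> nlinarith
    refine h1.trans_isLittleO ?_
    simpa only [Real.norm_eq_abs, sq_abs] using
      Asymptotics.isLittleO_pow_sub_sub s (m := 2) (by norm_num)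
  exact is_const_of_deriv_eq_zero (fun s => (hd s).differentiableAt) (fun s => (hd s).deriv) s t

theorem euclid {m : ℕ} (i₀ : Fin m) {N : (Fin m → ℝ) → ℝ} (h : IsNorm N)
    (key : ∀ x a : Fin m → ℝ, (∑ i, x i * a i) * N a ≤ N x * ∑ i, a i * a i) : IsLpNorm N := by
  left
  refine ⟨2, by norm_num, N (Pi.single i₀ 1), N_pos h (by simp), fun x => ?_⟩
  set e : Fin m → ℝ := Pi.single i₀ 1 with he
  have hxs : ∑ i, |x i| ^ (2 : ℝ) = ∑ i, x i * x i := by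
    refine Finset.sum_congr rfl fun i _ => ?_
    rw [Real.rpow_two, sq_abs, sq]
  rw [hxs, ← Real.sqrt_eq_rpow]
  set w : Fin m → ℝ := x - x i₀ • e with hw
  have hxw : x = x i₀ • e + w := by rw [hw]; abel
  have hee : ∑ i, e i * e i = 1 := by simp [he, Pi.single_apply]
  have hew : ∑ i, e i * w i = 0 := by simp [he, hw, Pi.single_apply]
  have hsq : ∑ i, x i * x i = x i₀ ^ 2 + ∑ i, w i * w i := by
    have : ∀ i, x i * x i = x i₀ ^ 2 * (e i * e i) + 2 * x i₀ * (e i * w i) + w i * w i := by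
      intro i; simp only [hw, Pi.sub_apply, Pi.smul_apply, smul_eq_mul]; ring
    rw [Finset.sum_congr rfl fun i _ => this i, Finset.sum_add_distrib, Finset.sum_add_distrib,
      ← Finset.mul_sum, ← Finset.mul_sum, hee, hew]
    ring
  by_cases hw0 : w = 0
  · rw [hsq, hw0]
    simp only [Pi.zero_apply, mul_zero, Finset.sum_const_zero, add_zero, Real.sqrt_sq_eq_abs]
    conv_lhs => rw [hxw, hw0, add_zero, h.2.1]
    ring
  have hW : 0 < ∑ i, w i * w i := by
    obtain ⟨i, hi⟩ := Function.ne_iff.1 hw0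
    exact Finset.sum_pos' (fun i _ => mul_self_nonneg _) ⟨i, Finset.mem_univ _, mul_self_pos.2 hi⟩
  set W := ∑ i, w i * w i with hWd
  have hsW : 0 < √W := Real.sqrt_pos.2 hW
  set v : Fin m → ℝ := (√W)⁻¹ • w with hv
  have hwv : w = √W • v := by rw [hv, smul_smul, mul_inv_cancel₀ hsW.ne', one_smul]
  have hev : ∑ i, e i * v i = 0 := by
    have : ∀ i, e i * v i = (√W)⁻¹ * (e i * w i) := by
      intro i; simp only [hv, Pi.smul_apply, smul_eq_mul]; ring
    rw [Finset.sum_congr rfl fun i _ => this i, ← Finset.mul_sum, hew, mul_zero]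
  have hvv : ∑ i, v i * v i = 1 := by
    have : ∀ i, v i * v i = (√W)⁻¹ ^ 2 * (w i * w i) := by
      intro i; simp only [hv, Pi.smul_apply, smul_eq_mul]; ring
    rw [Finset.sum_congr rfl fun i _ => this i, ← Finset.mul_sum, ← hWd, inv_pow,
      Real.sq_sqrt hW.le, inv_mul_cancel₀ hW.ne']
  set p : ℝ → Fin m → ℝ := fun t => Real.cos t • e + Real.sin t • v with hp
  have hpp : ∀ s t, ∑ i, p s i * p t i = Real.cos (s - t) := by
    intro s t
    have : ∀ i, p s i * p t i = (Real.cos s * Real.cos t) * (e i * e i) +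
        (Real.cos s * Real.sin t + Real.sin s * Real.cos t) * (e i * v i) +
        (Real.sin s * Real.sin t) * (v i * v i) := by
      intro i; simp only [hp, Pi.add_apply, Pi.smul_apply, smul_eq_mul]; ring
    rw [Finset.sum_congr rfl fun i _ => this i, Finset.sum_add_distrib, Finset.sum_add_distrib,
      ← Finset.mul_sum, ← Finset.mul_sum, ← Finset.mul_sum, hee, hev, hvv, Real.cos_sub]
    ring
  have hbd : ∀ s, N (p s) ≤ N e + N v := by
    intro s
    have h1 := h.2.2 (Real.cos s • e) (Real.sin s • v)
    rw [h.2.1, h.2.1] at h1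
    have h2 := mul_le_mul_of_nonneg_right (Real.abs_cos_le_one s) (N_nonneg h e)
    have h3 := mul_le_mul_of_nonneg_right (Real.abs_sin_le_one s) (N_nonneg h v)
    simp only [hp]
    linarith
  have hcst := const_of_sq (n := fun s => N (p s)) (K := (N e + N v) / 2) (by
    intro s t
    have h1 := key (p t) (p s)
    rw [hpp, hpp, sub_self, Real.cos_zero, mul_one] at h1
    have h2 := Real.one_sub_sq_div_two_le_cos (x := t - s)
    have h3 := N_nonneg h (p s)
    have h4 := hbd s
    have h5 := mul_le_mul_of_nonneg_right h2 h3
    have h6 := mul_le_mul_of_nonneg_right h4 (sq_nonneg (s - t))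
    nlinarith)
  set z : ℂ := ⟨x i₀, √W⟩ with hz
  have hz1 : ‖z‖ * Real.cos z.arg = x i₀ := Complex.norm_mul_cos_arg z
  have hz2 : ‖z‖ * Real.sin z.arg = √W := Complex.norm_mul_sin_arg z
  have hxp : x = ‖z‖ • p z.arg := by
    rw [hxw.trans (by rw [hwv] : x i₀ • e + w = x i₀ • e + √W • v), hp]
    simp only [smul_add, smul_smul]
    rw [hz1, hz2]
  have hp0 : p 0 = e := by simp [hp]
  have hzn : ‖z‖ = √(∑ i, x i * x i) := by
    rw [hsq, Complex.norm_def, Complex.normSq_apply]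
    congr 1
    simp only [hz]
    rw [Real.mul_self_sqrt hW.le]; ring
  have hc0 : N (p z.arg) = N e := by
    have := hcst z.arg 0
    simp only [hp0] at this
    exact this
  conv_lhs => rw [hxp, h.2.1, hc0, abs_of_nonneg (norm_nonneg z), hzn]
  ring

end FlinnAux

open FlinnAux

theorem flinn_elements_supported_on_single_coordinate
    {m : ℕ} (hm : 3 ≤ m) (N : (Fin m → ℝ) → ℝ)
    (hN : IsSymmLatticeNorm N)
    (hP' : ∀ t : ℝ, 0 < t →
      dualNorm N (Pi.single (⟨0, by omega⟩ : Fin m) (1 : ℝ)) <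
      dualNorm N (Pi.single (⟨0, by omega⟩ : Fin m) (1 : ℝ) +
        t • (Pi.single (⟨1, by omega⟩ : Fin m) (1 : ℝ) : Fin m → ℝ)))
    (hNp : ¬ IsLpNorm N)
    {H : Type*} [NormedAddCommGroup H] [InnerProductSpace ℝ H] [CompleteSpace H]
    (hdim : 2 ≤ Module.rank ℝ H)
    (hHcase : FiniteDimensional ℝ H ∨ TopologicalSpace.SeparableSpace H)
    (u : Fin m → H) (hu : IsVFlinn N u) :
    ∃ i₀ : Fin m, ∀ i, i ≠ i₀ → u i = 0 := by
  classical
  have : NeZero m := ⟨by omega⟩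
  obtain ⟨g, hF⟩ := hu
  have hL := hN.1
  have hNn := hN.1.1
  have : Nontrivial H := by
    rw [← rank_pos_iff_nontrivial (R := ℝ)]
    exact lt_of_lt_of_le (by norm_num) hdim
  by_contra! hcon
  obtain ⟨i, hgi⟩ := Function.ne_iff.1 hF.1
  obtain ⟨j, hji, huj⟩ := hcon i
  have hpar : ∀ k, ∃ (w : H) (c d : ℝ), ‖w‖ = 1 ∧ g k = c • w ∧ u k = d • w := by
    intro k
    refine parallel _ _ fun w hw => ?_
    have := flinn_real hL hF (Nm_single hL k) (fun _ => w) (fun _ => hw)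
    simpa [Pi.single_apply] using this
  choose w c d hw hg hud using hpar
  have hrel : ∀ a b : Fin m → ℝ, Nm N a b →
      (a i * c i) * (b j * d j) = (a j * c j) * (b i * d i) := by
    intro a b hab
    apply parallel_forms
    intro x y hx hy
    have hv : ∀ k, ∃ v : H, ‖v‖ = 1 ∧ ⟪w k, v⟫ = if k = i then x else if k = j then y else 0 := by
      intro k
      apply exists_inner_eq hdim _ (hw k)
      split_ifs
      · exact hx
      · exact hy
      · simp
    choose v hv1 hv2 using hv
    have := flinn_real hL hF hab v hv1
    have e : ∀ a c : Fin m → ℝ, ∑ k, a k * ⟪c k • w k, v k⟫ = a i * c i * x + a j * c j * y := by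
      intro a c
      rw [← Finset.sum_subset (Finset.subset_univ ({i, j} : Finset (Fin m)))]
      · rw [Finset.sum_pair (Ne.symm hji)]
        simp only [real_inner_smul_left, hv2, if_true, if_neg hji]
        ring
      · intro k _ hk
        simp only [Finset.mem_insert, Finset.mem_singleton, not_or] at hk
        simp [real_inner_smul_left, hv2, hk.1, hk.2]
    simp only [hg, hud, e] at this
    exact this
  have hci : c i ≠ 0 := by
    intro h0; apply hgi; rw [hg, h0, zero_smul]; rfl
  have hdj : d j ≠ 0 := by
    intro h0; apply huj; rw [hud, h0, zero_smul]
  have h11 := hrel _ _ (Nm_one hN)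
  simp only [one_mul] at h11
  have hcd : c i * d j ≠ 0 := mul_ne_zero hci hdj
  have hrel2 : ∀ a b : Fin m → ℝ, Nm N a b → a i * b j = a j * b i := by
    intro a b hab
    have := hrel a b hab
    apply mul_right_cancel₀ hcd
    linear_combination this - a j * b i * h11
  have hrel3 : ∀ a b : Fin m → ℝ, Nm N a b → ∀ k l, a k * b l = a l * b k := by
    intro a b hab k l
    by_cases hkl : k = l
    · subst hkl; rfl
    obtain ⟨π, hπi, hπj⟩ : ∃ π : Equiv.Perm (Fin m), π i = k ∧ π j = l := by
      refine ⟨(Equiv.swap i k).trans (Equiv.swap (Equiv.swap i k j) l), ?_, ?_⟩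
      · simp only [Equiv.trans_apply, Equiv.swap_apply_left]
        apply Equiv.swap_apply_of_ne_of_ne _ hkl
        intro h0
        have : Equiv.swap i k i = Equiv.swap i k j := by rw [Equiv.swap_apply_left]; exact h0
        exact hji ((Equiv.swap i k).injective this).symm
      · simp
    have := hrel2 _ _ (hab.perm hN π)
    simpa [hπi, hπj] using this
  apply hNp
  refine euclid i hNn fun x a => ?_
  by_cases ha : a = 0
  · simp [ha]
  obtain ⟨b, hb1, hb2⟩ := exists_Nm hNn ha
  have hpos := N_pos hNn ha
  have hab : Nm N a b := ⟨hpos, fun x => by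
    rw [hb1, mul_comm]; exact mul_le_mul_of_nonneg_right (hb2 x) hpos.le⟩
  have hid : (∑ k, x k * a k) * N a = (∑ k, x k * b k) * ∑ k, a k * a k := by
    rw [← hb1, Finset.sum_mul_sum, Finset.sum_mul_sum]
    refine Finset.sum_congr rfl fun k _ => Finset.sum_congr rfl fun l _ => ?_
    have := hrel3 a b hab k l
    linear_combination x k * a l * this
  rw [hid]
  exact mul_le_mul_of_nonneg_right (hb2 x) (Finset.sum_nonneg fun k _ => mul_self_nonneg _)
end
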